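/- There exist constants d > 1 and R > 1 with the following properties. First, for every real r ≥ 2 with f(r) > d² and every x ∈ c₀₀ with |||x|||_r ≠ ‖x‖_{ℓ∞}, |||x|||_r ≤ (1/(1 − d/√f(r))) · sup{ (1/f(ℓ)) Σ_{i=1}^ℓ |||E_i(x)|||_{r^{f(r)}} : ℓ ∈ ℕ, ℓ ≥ r, E₁ < ⋯ < E_ℓ }. Second, defining for r ≥ R the sequence r₀ = r, r_{k+1} = r_k^{f(r_k)}, the product β(r) = Π_{k=0}^∞ (1/(1 − d/√f(r_k)))·(f(9r_k)/f(r_k)) is finite, and for every sequence (ε_n)_{n≥1} of positive reals with Σ ε_n < ∞, every normalized block sequence (y_n)_{n≥1} of (e_i), and every strictly increasing (k_n)_{n≥0} in ℕ satisfying (1) sup{ Σ_{i=1}^k ‖E_i(y_n)‖ : 1 ≤ k ≤ k_{n−1}, E₁ < ⋯ < E_k } ≤ 1 + ε_n and (2) max supp(y_n) ≤ ε_n f(k_n/3) for all n ≥ 1, the following holds: for every r ≥ R, every m ∈ ℕ and all real scalars (α_i)_{i=1}^m, ||| Σ_{i=1}^m α_i y_i |||_r ≤ β(r) · max_{1 ≤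 i₀ ≤ m} [ |α_{i₀}| + ‖Σ_{i=i₀+1}^m α_i e_i‖ + Σ_{i=1}^m ε_i |α_i| ]. -/

import Mathlib

abbrev c00 : Type := ℕ →₀ ℝ

noncomputable def flog (x : ℝ) : ℝ := Real.logb 2 (x + 1)

noncomputable def supNorm (x : c00) : ℝ := ⨆ i, |x i|

def proj (E : Finset ℕ) (x : c00) : c00 := x.filter (· ∈ E)

def FLt (A B : Finset ℕ) : Prop := ∀ a ∈ A, ∀ b ∈ B, a < b

def IsNormC00 (N : c00 → ℝ) : Prop :=
  (∀ x, N x = 0 ↔ x = 0) ∧ (∀ x y, N (x + y) ≤ N x + N y) ∧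
    ∀ (a : ℝ) (x : c00), N (a • x) = |a| * N x

def schSet (N : c00 → ℝ) (x : c00) : Set ℝ :=
  {s | ∃ n : ℕ, 2 ≤ n ∧ ∃ E : Fin n → Finset ℕ,
    (∀ i j : Fin n, i < j → FLt (E i) (E j)) ∧
    s = (flog n)⁻¹ * ∑ i, N (proj (E i) x)}

def IsSchlumprechtNorm (N : c00 → ℝ) : Prop :=
  IsNormC00 N ∧ ∀ x : c00, IsLUB (insert (supNorm x) (schSet N x)) (N x)

def IsBlockSeq (x : ℕ → c00) : Prop :=
  (∀ n, x n ≠ 0) ∧ ∀ n, ∀ i ∈ (x n).support, ∀ j ∈ (x (n+1)).support, i < j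

def SeqEquiv (N : c00 → ℝ) (u v : ℕ → c00) : Prop :=
  ∃ c : ℝ, 1 ≤ c ∧ ∀ a : ℕ →₀ ℝ,
    (1 / c) * N (a.sum fun i t => t • u i) ≤ N (a.sum fun i t => t • v i) ∧
    N (a.sum fun i t => t • v i) ≤ c * N (a.sum fun i t => t • u i)

/-- `‖x‖_ℓ` : the supremum of `(1/f(ℓ)) ∑ᵢ N(Eᵢ x)` over `E₁ < ⋯ < E_ℓ`. -/
noncomputable def normL (N : c00 → ℝ) (l : ℕ) (x : c00) : ℝ :=
  sSup {s | ∃ E : Fin l → Finset ℕ, (∀ i j : Fin l, i < j → FLt (E i) (E j)) ∧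
    s = (flog l)⁻¹ * ∑ i, N (proj (E i) x)}

/-- `|||x|||_r = max(‖x‖_{ℓ∞}, sup {‖x‖_ℓ : ℓ ∈ ℕ, ℓ ≥ r})`. -/
noncomputable def normR (N : c00 → ℝ) (r : ℝ) (x : c00) : ℝ :=
  max (supNorm x) (sSup {s | ∃ l : ℕ, r ≤ (l : ℝ) ∧ s = normL N l x})

/-- The recursively defined sequence `r₀ = r`, `r_{k+1} = r_k ^ f(r_k)`. -/
noncomputable def rseq (r : ℝ) : ℕ → ℝ
  | 0 => r
  | k + 1 => rseq r k ^ flog (rseq r k)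


section basics

set_option linter.unusedVariables false

lemma flog_mono {a b : ℝ} (ha : 0 ≤ a) (h : a ≤ b) : flog a ≤ flog b := by
  unfold flog
  exact Real.logb_le_logb_of_le (by norm_num) (by linarith) (by linarith)

lemma flog_one : flog 1 = 1 := by
  unfold flog; norm_num

lemma one_le_flog {a : ℝ} (ha : 1 ≤ a) : 1 ≤ flog a := by
  rw [← flog_one]; exact flog_mono (by norm_num) ha

lemma flog_two_gt : 1 < flog 2 := by
  unfold flog
  rw [Real.lt_logb_iff_rpow_lt (by norm_num) (by norm_num)]
  norm_num

lemma flog_nat_pos {l : ℕ} (hl : 2 ≤ l) : 0 < flog (l : ℝ) := by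
  have : (1:ℝ) ≤ l := by exact_mod_cast (by omega : 1 ≤ l)
  linarith [one_le_flog this]

lemma two_rpow_flog {a : ℝ} (ha : 0 ≤ a) : (2:ℝ) ^ flog a = a + 1 := by
  unfold flog
  exact Real.rpow_logb (by norm_num) (by norm_num) (by linarith)

lemma flog_le_iff {a t : ℝ} (ha : 0 ≤ a) : flog a ≤ t ↔ a + 1 ≤ 2 ^ t := by
  unfold flog
  exact Real.logb_le_iff_le_rpow (by norm_num) (by linarith)

lemma flog_submul {a b : ℝ} (ha : 1 ≤ a) (hb : 1 ≤ b) : flog (a * b) ≤ flog a * flog b := by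
  have hA := one_le_flog ha
  have hab : 0 ≤ a * b := by positivity
  rw [flog_le_iff hab, mul_comm (flog a), Real.rpow_mul (by norm_num), two_rpow_flog (by linarith)]
  have hcv := (convexOn_rpow hA).2
  have hc := @hcv 1 (by simp) (b + 1) (by simp; linarith) (1 - 1 / b) (1 / b) (by
      rw [sub_nonneg, div_le_one (by linarith)]; exact hb) (by positivity) (by ring)
  have e : (1 - 1 / b) • (1:ℝ) + (1 / b) • (b + 1) = 2 := by
    simp only [smul_eq_mul]; field_simp; ring
  rw [e] at hc
  simp only [smul_eq_mul] at hc
  rw [two_rpow_flog (by linarith), Real.one_rpow] at hc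
  have hb0 : 0 < b := by linarith
  have h2 := mul_le_mul_of_nonneg_left hc hb0.le
  have h3 : b * ((1 - 1 / b) * 1 + 1 / b * (b + 1) ^ flog a) = b - 1 + (b + 1) ^ flog a := by
    field_simp
  rw [h3] at h2
  linarith

lemma proj_apply (E : Finset ℕ) (x : c00) (i : ℕ) : proj E x i = if i ∈ E then x i else 0 := by
  unfold proj; rw [Finsupp.filter_apply]

lemma proj_proj (A B : Finset ℕ) (x : c00) : proj A (proj B x) = proj (A ∩ B) x := by
  ext i; simp only [proj_apply, Finset.mem_inter]; split_ifs <;> tauto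

lemma proj_empty (x : c00) : proj ∅ x = 0 := by
  ext i; simp [proj_apply]

lemma proj_add (E : Finset ℕ) (x y : c00) : proj E (x + y) = proj E x + proj E y := by
  ext i; simp only [proj_apply, Finsupp.add_apply]; split_ifs <;> simp

lemma proj_smul (E : Finset ℕ) (a : ℝ) (x : c00) : proj E (a • x) = a • proj E x := by
  ext i; simp only [proj_apply, Finsupp.smul_apply]; split_ifs <;> simp

lemma proj_zero (E : Finset ℕ) : proj E 0 = 0 := by
  ext i; simp [proj_apply]

lemma proj_sum {ι : Type*} (E : Finset ℕ) (s : Finset ι) (x : ι → c00) :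
    proj E (∑ i ∈ s, x i) = ∑ i ∈ s, proj E (x i) := by
  classical
  induction s using Finset.induction_on with
  | empty => simp [proj_zero]
  | insert a s ha ih => rw [Finset.sum_insert ha, Finset.sum_insert ha, proj_add, ih]

lemma proj_support (E : Finset ℕ) (x : c00) : proj (E ∩ x.support) x = proj E x := by
  ext i; simp only [proj_apply, Finset.mem_inter, Finsupp.mem_support_iff]
  by_cases h : x i = 0 <;> simp [h]

lemma supNorm_bdd (x : c00) : BddAbove (Set.range fun i => |x i|) := by
  refine ⟨∑ i ∈ x.support, |x i|, ?_⟩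
  rintro _ ⟨i, rfl⟩
  by_cases h : i ∈ x.support
  · exact Finset.single_le_sum (f := fun i => |x i|) (fun _ _ => abs_nonneg _) h
  · rw [Finsupp.notMem_support_iff] at h
    simp only [h, abs_zero]
    exact Finset.sum_nonneg (fun _ _ => abs_nonneg _)

lemma le_supNorm (x : c00) (i : ℕ) : |x i| ≤ supNorm x := le_ciSup (supNorm_bdd x) i

lemma supNorm_le {x : c00} {c : ℝ} (h : ∀ i, |x i| ≤ c) : supNorm x ≤ c := ciSup_le h

lemma supNorm_nonneg (x : c00) : 0 ≤ supNorm x := (abs_nonneg _).trans (le_supNorm x 0)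

lemma supNorm_proj (E : Finset ℕ) (x : c00) : supNorm (proj E x) ≤ supNorm x := by
  apply supNorm_le; intro i; rw [proj_apply]
  split_ifs
  · exact le_supNorm x i
  · simpa using supNorm_nonneg x

lemma FLt_mono {A B A' B' : Finset ℕ} (h : FLt A B) (hA : A' ⊆ A) (hB : B' ⊆ B) : FLt A' B' :=
  fun a ha b hb => h a (hA ha) b (hB hb)

/-- conversion of a separated finite family into an ordered family indexed by `Fin n`. -/
lemma toFin_aux {ι : Type*} [DecidableEq ι] (A : ι → Finset ℕ) (φ : Finset ℕ → ℝ) (h0 : φ ∅ = 0)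
    (s : Finset ι) :
    (∀ i ∈ s, ∀ j ∈ s, i ≠ j → FLt (A i) (A j) ∨ FLt (A j) (A i)) → ∀ n : ℕ, s.card ≤ n →
    ∃ E : Fin n → Finset ℕ, (∀ i j : Fin n, i < j → FLt (E i) (E j)) ∧
      (∀ i, E i = ∅ ∨ ∃ x ∈ s, E i = A x) ∧ ∑ i, φ (E i) = ∑ i ∈ s, φ (A i) := by
  induction s using Finset.induction_on_max_value (fun i => (A i).sup id) with
  | empty =>
    intro _ n _
    refine ⟨fun _ => ∅, ?_, fun _ => Or.inl rfl, by simp [h0]⟩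
    intro i j _ a ha; simp at ha
  | insert a s ha hmax ih =>
    intro hsep n hn
    rw [Finset.card_insert_of_notMem ha] at hn
    obtain ⟨m, rfl⟩ : ∃ m, n = m + 1 := ⟨n - 1, by omega⟩
    obtain ⟨E, hE, hE2, hE3⟩ := ih (fun i hi j hj => hsep i (Finset.mem_insert_of_mem hi) j
      (Finset.mem_insert_of_mem hj)) m (by omega)
    have key : ∀ x ∈ s, FLt (A x) (A a) := by
      intro x hx
      have hne : x ≠ a := fun h => ha (h ▸ hx)
      rcases hsep x (Finset.mem_insert_of_mem hx) a (Finset.mem_insert_self _ _) hne with h | h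
      · exact h
      · intro p hp q hq
        exfalso
        have hm := hmax x hx
        obtain ⟨t, ht, hte⟩ := Finset.exists_mem_eq_sup (A a) ⟨q, hq⟩ id
        have h1 : p ≤ (A x).sup id := Finset.le_sup (f := id) hp
        have h2 := h t ht p hp
        simp only [id] at hte
        have h3 : (A a).sup id = t := hte
        omega
    refine ⟨Fin.snoc (α := fun _ => Finset ℕ) E (A a), ?_, ?_, ?_⟩
    · intro i j hij
      induction j using Fin.lastCases with
      | last =>
        induction i using Fin.lastCases with
        | last => exact absurd hij (lt_irrefl _)
        | cast i =>
          rw [Fin.snoc_castSucc, Fin.snoc_last]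
          rcases hE2 i with h | ⟨x, hx, h⟩
          · rw [h]; intro p hp; simp at hp
          · rw [h]; exact key x hx
      | cast j =>
        induction i using Fin.lastCases with
        | last => exact absurd hij (not_lt.mpr (Fin.le_last _))
        | cast i =>
          rw [Fin.snoc_castSucc, Fin.snoc_castSucc]
          exact hE i j (by simpa using hij)
    · intro i
      induction i using Fin.lastCases with
      | last => right; exact ⟨a, Finset.mem_insert_self _ _, by rw [Fin.snoc_last]⟩
      | cast i =>
        rw [Fin.snoc_castSucc]
        rcases hE2 i with h | ⟨x, hx, h⟩
        · exact Or.inl h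
        · exact Or.inr ⟨x, Finset.mem_insert_of_mem hx, h⟩
    · rw [Fin.sum_univ_castSucc, Finset.sum_insert ha]
      simp only [Fin.snoc_castSucc, Fin.snoc_last]
      rw [hE3]; ring

lemma toFin {ι : Type*} (A : ι → Finset ℕ) (φ : Finset ℕ → ℝ) (h0 : φ ∅ = 0)
    (s : Finset ι)
    (hs : ∀ i ∈ s, ∀ j ∈ s, i ≠ j → FLt (A i) (A j) ∨ FLt (A j) (A i)) (n : ℕ) (hn : s.card ≤ n) :
    ∃ E : Fin n → Finset ℕ, (∀ i j : Fin n, i < j → FLt (E i) (E j)) ∧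
      ∑ i, φ (E i) = ∑ i ∈ s, φ (A i) := by
  classical
  obtain ⟨E, h1, _, h3⟩ := toFin_aux A φ h0 s hs n hn
  exact ⟨E, h1, h3⟩

variable {N : c00 → ℝ}

lemma N_zero (hN : IsSchlumprechtNorm N) : N 0 = 0 := (hN.1.1 0).2 rfl

lemma N_smul (hN : IsSchlumprechtNorm N) (a : ℝ) (x : c00) : N (a • x) = |a| * N x := hN.1.2.2 a x

lemma N_add (hN : IsSchlumprechtNorm N) (x y : c00) : N (x + y) ≤ N x + N y := hN.1.2.1 x y

lemma N_nonneg (hN : IsSchlumprechtNorm N) (x : c00) : 0 ≤ N x := by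
  have h1 := N_add hN x ((-1 : ℝ) • x)
  have h2 : x + (-1 : ℝ) • x = 0 := by simp
  rw [h2, N_zero hN, N_smul hN] at h1
  simp at h1; linarith

lemma N_sum (hN : IsSchlumprechtNorm N) {ι : Type*} (s : Finset ι) (x : ι → c00) :
    N (∑ i ∈ s, x i) ≤ ∑ i ∈ s, N (x i) := by
  classical
  induction s using Finset.induction_on with
  | empty => simp [N_zero hN]
  | insert a s ha ih =>
    rw [Finset.sum_insert ha, Finset.sum_insert ha]
    exact (N_add hN _ _).trans (by linarith)

lemma supNorm_le_N (hN : IsSchlumprechtNorm N) (x : c00) : supNorm x ≤ N x :=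
  (hN.2 x).1 (Set.mem_insert _ _)

lemma sch_le_N (hN : IsSchlumprechtNorm N) (x : c00) {n : ℕ} (hn : 2 ≤ n) (E : Fin n → Finset ℕ)
    (hE : ∀ i j : Fin n, i < j → FLt (E i) (E j)) :
    (flog n)⁻¹ * ∑ i, N (proj (E i) x) ≤ N x :=
  (hN.2 x).1 (Set.mem_insert_of_mem _ ⟨n, hn, E, hE, rfl⟩)

lemma inter_ordered {n : ℕ} {E : Fin n → Finset ℕ} (hE : ∀ i j : Fin n, i < j → FLt (E i) (E j))
    (A : Finset ℕ) : ∀ i j : Fin n, i < j → FLt (E i ∩ A) (E j ∩ A) :=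
  fun i j hij => FLt_mono (hE i j hij) Finset.inter_subset_left Finset.inter_subset_left

lemma N_proj (hN : IsSchlumprechtNorm N) (A : Finset ℕ) (x : c00) : N (proj A x) ≤ N x := by
  apply (hN.2 (proj A x)).2
  rintro s (rfl | ⟨n, hn, E, hE, rfl⟩)
  · exact (supNorm_proj A x).trans (supNorm_le_N hN x)
  · simp only [proj_proj]
    exact sch_le_N hN x hn _ (inter_ordered hE A)

lemma disjoint_of_ordered {n : ℕ} {E : Fin n → Finset ℕ}
    (hE : ∀ i j : Fin n, i < j → FLt (E i) (E j)) {i j : Fin n} {a : ℕ} (hi : a ∈ E i)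
    (hj : a ∈ E j) : i = j := by
  rcases lt_trichotomy i j with h | h | h
  · exact absurd (hE i j h a hi a hj) (lt_irrefl _)
  · exact h
  · exact absurd (hE j i h a hj a hi) (lt_irrefl _)

lemma N_single (hN : IsSchlumprechtNorm N) (j : ℕ) : N (Finsupp.single j (1:ℝ)) = 1 := by
  set e : c00 := Finsupp.single j (1:ℝ) with he
  have hpe : ∀ A : Finset ℕ, proj A e = if j ∈ A then e else 0 := by
    intro A; ext i
    rw [proj_apply]
    by_cases hij : i = j
    · subst hij; split_ifs <;> simp
    · have : e i = 0 := by rw [he, Finsupp.single_apply]; simp [Ne.symm hij]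
      rw [this]; split_ifs <;> simp [this]
  have h0 := N_nonneg hN e
  have hsup : supNorm e = 1 := by
    apply le_antisymm
    · apply supNorm_le; intro i; rw [he, Finsupp.single_apply]; split_ifs <;> simp
    · have := le_supNorm e j; rw [he] at this ⊢; simpa using this
  have h1 : 1 ≤ N e := hsup ▸ supNorm_le_N hN e
  have hf := flog_two_gt
  have h2 : N e ≤ max 1 ((flog 2)⁻¹ * N e) := by
    apply (hN.2 e).2
    rintro s (rfl | ⟨n, hn, E, hE, rfl⟩)
    · rw [hsup]; exact le_max_left _ _
    · apply le_max_of_le_right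
      have hs : ∑ i, N (proj (E i) e) ≤ N e := by
        by_cases hex : ∃ i, j ∈ E i
        · obtain ⟨i, hi⟩ := hex
          rw [Finset.sum_eq_single i]
          · exact N_proj hN _ _
          · intro i' _ hne
            rw [hpe, if_neg, N_zero hN]
            intro hi'; exact hne (disjoint_of_ordered hE hi' hi)
          · simp
        · push Not at hex
          rw [Finset.sum_eq_zero]
          · exact h0
          · intro i _; rw [hpe, if_neg (hex i), N_zero hN]
      have hf2 : flog 2 ≤ flog n := flog_mono (by norm_num) (by exact_mod_cast hn)
      calc _ ≤ (flog n)⁻¹ * N e := by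
            apply mul_le_mul_of_nonneg_left hs; have := flog_nat_pos hn; positivity
        _ ≤ _ := by
            apply mul_le_mul_of_nonneg_right _ h0
            exact inv_anti₀ (by linarith) hf2
  rcases le_max_iff.1 h2 with h | h
  · linarith
  · exfalso
    rw [← div_eq_inv_mul, le_div_iff₀ (by linarith)] at h
    nlinarith

lemma N_smul_single (hN : IsSchlumprechtNorm N) (j : ℕ) (a : ℝ) :
    N (a • Finsupp.single j (1:ℝ)) = |a| := by
  rw [N_smul hN, N_single hN, mul_one]

lemma N_le_l1 (hN : IsSchlumprechtNorm N) (x : c00) (s : Finset ℕ) (hs : x.support ⊆ s) :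
    N x ≤ ∑ i ∈ s, |x i| := by
  have : x = ∑ i ∈ s, (x i) • (Finsupp.single i (1:ℝ) : c00) := by
    ext j
    rw [Finsupp.finsetSum_apply]
    simp only [Finsupp.smul_apply, Finsupp.single_apply, smul_eq_mul, mul_ite, mul_one, mul_zero]
    rw [Finset.sum_ite_eq']
    split_ifs with h
    · rfl
    · exact Finsupp.notMem_support_iff.1 (fun h' => h (hs h'))
  calc N x = N (∑ i ∈ s, (x i) • (Finsupp.single i (1:ℝ) : c00)) := by rw [← this]
    _ ≤ _ := N_sum hN _ _
    _ = _ := Finset.sum_congr rfl fun i _ => N_smul_single hN i (x i)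

/-! ### `normL` and `normR` -/

lemma normL_le (hN : IsSchlumprechtNorm N) {l : ℕ} {x : c00} {c : ℝ}
    (h : ∀ E : Fin l → Finset ℕ, (∀ i j : Fin l, i < j → FLt (E i) (E j)) →
      (flog l)⁻¹ * ∑ i, N (proj (E i) x) ≤ c) : normL N l x ≤ c := by
  apply csSup_le
  · exact ⟨_, fun _ => ∅, fun _ _ _ a ha => by simp at ha, rfl⟩
  · rintro s ⟨E, hE, rfl⟩; exact h E hE

lemma le_normL (hN : IsSchlumprechtNorm N) {l : ℕ} (hl : 2 ≤ l) (x : c00) (E : Fin l → Finset ℕ)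
    (hE : ∀ i j : Fin l, i < j → FLt (E i) (E j)) :
    (flog l)⁻¹ * ∑ i, N (proj (E i) x) ≤ normL N l x := by
  apply le_csSup
  · refine ⟨N x, ?_⟩
    rintro s ⟨E, hE, rfl⟩; exact sch_le_N hN x hl E hE
  · exact ⟨E, hE, rfl⟩

lemma normR_le (hN : IsSchlumprechtNorm N) {r : ℝ} {x : c00} {c : ℝ} (h0 : supNorm x ≤ c)
    (h : ∀ l : ℕ, r ≤ l → ∀ E : Fin l → Finset ℕ, (∀ i j : Fin l, i < j → FLt (E i) (E j)) →
      (flog l)⁻¹ * ∑ i, N (proj (E i) x) ≤ c) : normR N r x ≤ c := by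
  apply max_le h0
  apply Real.sSup_le
  · rintro s ⟨l, hl, rfl⟩; exact normL_le hN (h l hl)
  · exact (supNorm_nonneg x).trans h0

lemma two_le_of_real {r : ℝ} (hr : 2 ≤ r) {l : ℕ} (hl : r ≤ l) : 2 ≤ l := by
  exact_mod_cast hr.trans hl

lemma le_normR (hN : IsSchlumprechtNorm N) {r : ℝ} (hr : 2 ≤ r) (x : c00) {l : ℕ} (hl : r ≤ l)
    (E : Fin l → Finset ℕ) (hE : ∀ i j : Fin l, i < j → FLt (E i) (E j)) :
    (flog l)⁻¹ * ∑ i, N (proj (E i) x) ≤ normR N r x := by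
  apply le_max_of_le_right
  refine (le_normL hN (two_le_of_real hr hl) x E hE).trans ?_
  apply le_csSup
  · refine ⟨N x, ?_⟩
    rintro s ⟨l, hl, rfl⟩
    exact normL_le hN fun E hE => sch_le_N hN x (two_le_of_real hr hl) E hE
  · exact ⟨l, hl, rfl⟩

lemma normR_le_N (hN : IsSchlumprechtNorm N) {r : ℝ} (hr : 2 ≤ r) (x : c00) : normR N r x ≤ N x :=
  normR_le hN (supNorm_le_N hN x) fun _ hl E hE => sch_le_N hN x (two_le_of_real hr hl) E hE

lemma normR_nonneg (r : ℝ) (x : c00) : 0 ≤ normR N r x :=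
  (supNorm_nonneg x).trans (le_max_left _ _)

lemma supNorm_le_normR (r : ℝ) (x : c00) : supNorm x ≤ normR N r x := le_max_left _ _

lemma normR_proj (hN : IsSchlumprechtNorm N) {r : ℝ} (hr : 2 ≤ r) (A : Finset ℕ) (x : c00) :
    normR N r (proj A x) ≤ normR N r x := by
  apply normR_le hN ((supNorm_proj A x).trans (supNorm_le_normR _ _))
  intro l hl E hE
  simp only [proj_proj]
  exact le_normR hN hr x hl _ (inter_ordered hE A)

lemma normR_add (hN : IsSchlumprechtNorm N) {r : ℝ} (hr : 2 ≤ r) (x y : c00) :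
    normR N r (x + y) ≤ normR N r x + normR N r y := by
  apply normR_le hN
  · apply supNorm_le; intro i
    rw [Finsupp.add_apply]
    refine (abs_add_le _ _).trans ?_
    exact add_le_add ((le_supNorm x i).trans (supNorm_le_normR _ _))
      ((le_supNorm y i).trans (supNorm_le_normR _ _))
  · intro l hl E hE
    refine le_trans ?_ (add_le_add (le_normR hN hr x hl E hE) (le_normR hN hr y hl E hE))
    rw [← mul_add, ← Finset.sum_add_distrib]
    have := flog_nat_pos (two_le_of_real hr hl)
    apply mul_le_mul_of_nonneg_left _ (by positivity)
    apply Finset.sum_le_sum; intro i _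
    rw [proj_add]; exact N_add hN _ _

lemma normR_zero (hN : IsSchlumprechtNorm N) {r : ℝ} (hr : 2 ≤ r) : normR N r 0 = 0 :=
  le_antisymm ((normR_le_N hN hr 0).trans (N_zero hN).le) (normR_nonneg r 0)

/-- sums over separated families -/
lemma sep_sum_le (hN : IsSchlumprechtNorm N) {r : ℝ} (hr : 2 ≤ r) (x : c00) {ι : Type*}
    (A : ι → Finset ℕ) (s : Finset ι)
    (hs : ∀ i ∈ s, ∀ j ∈ s, i ≠ j → FLt (A i) (A j) ∨ FLt (A j) (A i)) (n : ℕ) (hn : s.card ≤ n)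
    (hrn : r ≤ n) : ∑ i ∈ s, N (proj (A i) x) ≤ flog n * normR N r x := by
  obtain ⟨E, hE, h⟩ := toFin A (fun B => N (proj B x)) (by simp [proj_empty, N_zero hN]) s hs n hn
  rw [← h]
  have h1 := le_normR hN hr x hrn E hE
  have := flog_nat_pos (two_le_of_real hr hrn)
  rwa [inv_mul_le_iff₀ this] at h1

lemma attain (hN : IsSchlumprechtNorm N) {ρ : ℝ} (hρ : 2 ≤ ρ) (x : c00)
    (hx : normR N ρ x < N x) :
    ∃ l : ℕ, 2 ≤ l ∧ (l : ℝ) < ρ ∧ ∃ E : Fin l → Finset ℕ,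
      (∀ i j : Fin l, i < j → FLt (E i) (E j)) ∧ N x ≤ (flog l)⁻¹ * ∑ i, N (proj (E i) x) := by
  set V : Set ℝ := {s | ∃ l : ℕ, 2 ≤ l ∧ (l : ℝ) < ρ ∧ ∃ E : Fin l → Finset ℕ,
      (∀ i j : Fin l, i < j → FLt (E i) (E j)) ∧ s = (flog l)⁻¹ * ∑ i, N (proj (E i) x)} with hV
  have hfin : V.Finite := by
    have : V ⊆ ⋃ l ∈ Set.Iio ⌈ρ⌉₊, (fun E : Fin l → Finset ℕ =>
        (flog l)⁻¹ * ∑ i, N (proj (E i) x)) ''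
          (Set.pi Set.univ fun _ => (x.support.powerset : Set (Finset ℕ))) := by
      rintro s ⟨l, hl, hlρ, E, hE, rfl⟩
      simp only [Set.mem_iUnion]
      refine ⟨l, Nat.lt_ceil.2 hlρ, fun i => E i ∩ x.support, ?_, ?_⟩
      · intro i _; simp
      · simp only [proj_support]
    refine Set.Finite.subset ?_ this
    refine Set.Finite.biUnion (Set.finite_Iio _) fun l _ => ?_
    exact (Set.Finite.pi fun _ => Finset.finite_toSet _).image _
  have hne : V.Nonempty := by
    by_contra hemp
    rw [Set.not_nonempty_iff_eq_empty] at hemp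
    apply absurd hx; rw [not_lt]
    apply (hN.2 x).2
    rintro s (rfl | ⟨n, hn, E, hE, rfl⟩)
    · exact supNorm_le_normR _ _
    · by_cases h : ρ ≤ n
      · exact le_normR hN hρ x h E hE
      · have : (flog n)⁻¹ * ∑ i, N (proj (E i) x) ∈ V := ⟨n, hn, not_le.1 h, E, hE, rfl⟩
        rw [hemp] at this; exact this.elim
  obtain ⟨v, hv, hmax⟩ := hfin.exists_maximal hne |>.imp fun v hv => hv
  obtain ⟨l, hl, hlρ, E, hE, rfl⟩ := id hv
  refine ⟨l, hl, hlρ, E, hE, ?_⟩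
  set v := (flog l)⁻¹ * ∑ i, N (proj (E i) x)
  have hub : N x ≤ max (normR N ρ x) v := by
    apply (hN.2 x).2
    rintro s (rfl | ⟨n, hn, E, hE, rfl⟩)
    · exact le_max_of_le_left (supNorm_le_normR _ _)
    · by_cases h : ρ ≤ n
      · exact le_max_of_le_left (le_normR hN hρ x h E hE)
      · apply le_max_of_le_right
        have hm : (flog n)⁻¹ * ∑ i, N (proj (E i) x) ∈ V := ⟨n, hn, not_le.1 h, E, hE, rfl⟩
        rcases le_total ((flog n)⁻¹ * ∑ i, N (proj (E i) x)) v with h | h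
        · exact h
        · exact hmax hm h
  rcases le_max_iff.1 hub with h | h
  · exact absurd hx (not_lt.2 h)
  · exact h

end basics

section treepart

variable {N : c00 → ℝ}

lemma tree (hN : IsSchlumprechtNorm N) {ρ : ℝ} (hρ : 2 ≤ ρ) (x : c00) :
    ∀ (n : ℕ) (G : ℝ), G ≤ flog 2 ^ n → ∀ E : Finset ℕ,
    ∃ (ι : Type) (_ : Fintype ι) (A : ι → Finset ℕ) (g P : ι → ℝ),
      (∀ j, A j ⊆ E) ∧ (∀ j j', j ≠ j' → FLt (A j) (A j') ∨ FLt (A j') (A j)) ∧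
      (∀ j, 1 ≤ g j ∧ 1 ≤ P j ∧ flog (P j) ≤ g j ∧ g j ≤ max 1 (G * flog ρ) ∧
        (G ≤ g j ∨ N (proj (A j) x) ≤ normR N ρ (proj (A j) x))) ∧
      ∑ j, (P j)⁻¹ ≤ 1 ∧ N (proj E x) ≤ ∑ j, (g j)⁻¹ * N (proj (A j) x) := by
  intro n
  have base : ∀ (G : ℝ) (E : Finset ℕ), (G ≤ 1 ∨ N (proj E x) ≤ normR N ρ (proj E x)) →
    ∃ (ι : Type) (_ : Fintype ι) (A : ι → Finset ℕ) (g P : ι → ℝ),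
      (∀ j, A j ⊆ E) ∧ (∀ j j', j ≠ j' → FLt (A j) (A j') ∨ FLt (A j') (A j)) ∧
      (∀ j, 1 ≤ g j ∧ 1 ≤ P j ∧ flog (P j) ≤ g j ∧ g j ≤ max 1 (G * flog ρ) ∧
        (G ≤ g j ∨ N (proj (A j) x) ≤ normR N ρ (proj (A j) x))) ∧
      ∑ j, (P j)⁻¹ ≤ 1 ∧ N (proj E x) ≤ ∑ j, (g j)⁻¹ * N (proj (A j) x) := by
    intro G E h
    refine ⟨Unit, inferInstance, fun _ => E, fun _ => 1, fun _ => 1, fun _ => subset_rfl, ?_, ?_,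
      by simp, by simp⟩
    · intro j j' h; exact absurd (Subsingleton.elim _ _) h
    · intro _; exact ⟨le_rfl, le_rfl, flog_one.le, le_max_left _ _, h⟩
  induction n with
  | zero =>
    intro G hG E
    exact base G E (Or.inl (by simpa using hG))
  | succ n ih =>
    intro G hG E
    by_cases hterm : G ≤ 1 ∨ N (proj E x) ≤ normR N ρ (proj E x)
    · exact base G E hterm
    push Not at hterm
    obtain ⟨hG1, hlt⟩ := hterm
    obtain ⟨l, hl, hlρ, D, hD, hNx⟩ := attain hN hρ _ hlt
    simp only [proj_proj] at hNx
    have hf2 : flog 2 ≤ flog l := flog_mono (by norm_num) (by exact_mod_cast hl)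
    have h2 := flog_two_gt
    have hfl : 0 < flog l := by linarith
    have hG' : G / flog l ≤ flog 2 ^ n := by
      rw [div_le_iff₀ hfl]
      refine hG.trans ?_
      rw [pow_succ]; gcongr
    choose ι hι A g P h1 h2 h3 h4 h5 using fun i : Fin l => ih (G / flog l) hG' (D i ∩ E)
    have hl1 : (1:ℝ) ≤ l := by exact_mod_cast (by omega : 1 ≤ l)
    refine ⟨Σ i : Fin l, ι i, inferInstance, fun p => A p.1 p.2, fun p => flog l * g p.1 p.2,
      fun p => l * P p.1 p.2, ?_, ?_, ?_, ?_, ?_⟩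
    · rintro ⟨i, j⟩; exact (h1 i j).trans Finset.inter_subset_right
    · rintro ⟨i, j⟩ ⟨i', j'⟩ hne
      by_cases hii : i = i'
      · subst hii
        exact h2 i j j' (fun h => hne (by rw [h]))
      · rcases lt_or_gt_of_ne hii with h | h
        · left; exact FLt_mono (hD i i' h) ((h1 i j).trans Finset.inter_subset_left)
            ((h1 i' j').trans Finset.inter_subset_left)
        · right; exact FLt_mono (hD i' i h) ((h1 i' j').trans Finset.inter_subset_left)
            ((h1 i j).trans Finset.inter_subset_left)
    · rintro ⟨i, j⟩
      obtain ⟨a1, a2, a3, a4, a5⟩ := h3 i j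
      have hfl1 : 1 ≤ flog l := by linarith
      have hfρ : flog l ≤ flog ρ := flog_mono (by linarith) hlρ.le
      refine ⟨?_, ?_, ?_, ?_, ?_⟩
      · exact one_le_mul_of_one_le_of_one_le hfl1 a1
      · exact one_le_mul_of_one_le_of_one_le hl1 a2
      · exact (flog_submul hl1 a2).trans (mul_le_mul_of_nonneg_left a3 hfl.le)
      · apply le_max_of_le_right
        rcases le_max_iff.1 a4 with h | h
        · have : g i j = 1 := le_antisymm h a1
          simp only [this, mul_one]
          nlinarith
        · calc flog l * g i j ≤ flog l * (G / flog l * flog ρ) := by gcongr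
            _ = G * flog ρ := by field_simp
      · rcases a5 with h | h
        · left; rwa [div_le_iff₀ hfl, mul_comm] at h
        · right; exact h
    · rw [Fintype.sum_sigma]
      calc ∑ i : Fin l, ∑ j, ((l:ℝ) * P i j)⁻¹ = ∑ i : Fin l, (l:ℝ)⁻¹ * ∑ j, (P i j)⁻¹ := by
            apply Finset.sum_congr rfl; intro i _
            rw [Finset.mul_sum]; apply Finset.sum_congr rfl; intro j _; rw [mul_inv]
        _ ≤ ∑ i : Fin l, (l:ℝ)⁻¹ * 1 := by
            apply Finset.sum_le_sum; intro i _; gcongr; exact h4 i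
        _ = 1 := by simp; field_simp
    · rw [Fintype.sum_sigma]
      refine hNx.trans ?_
      rw [Finset.mul_sum]
      apply Finset.sum_le_sum; intro i _
      calc (flog l)⁻¹ * N (proj (D i ∩ E) x)
          ≤ (flog l)⁻¹ * ∑ j, (g i j)⁻¹ * N (proj (A i j) x) := by gcongr; exact h5 i
        _ = _ := by
            rw [Finset.mul_sum]; apply Finset.sum_congr rfl; intro j _; rw [mul_inv]; ring

lemma flog_rpow_le {r : ℝ} (hr : 2 ≤ r) : flog (r ^ flog r) ≤ flog r * flog r := by
  have hF : 1 ≤ flog r := one_le_flog (by linarith)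
  have h0 : (0:ℝ) ≤ r ^ flog r := by positivity
  rw [flog_le_iff h0, Real.rpow_mul (by norm_num), two_rpow_flog (by linarith)]
  have := Real.add_rpow_le_rpow_add (a := r) (b := 1) (by linarith) (by norm_num) hF
  simpa using this

lemma two_le_rho {r : ℝ} (hr : 2 ≤ r) : 2 ≤ r ^ flog r := by
  have hF : 1 ≤ flog r := one_le_flog (by linarith)
  exact hr.trans (Real.self_le_rpow_of_one_le (by linarith) hF)

/-- the supremum on the right hand side of the character lemma -/
noncomputable def Ssup (N : c00 → ℝ) (r : ℝ) (x : c00) : ℝ :=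
  sSup {s | ∃ l : ℕ, r ≤ (l : ℝ) ∧ ∃ E : Fin l → Finset ℕ,
              (∀ i j : Fin l, i < j → FLt (E i) (E j)) ∧
              s = (flog l)⁻¹ * ∑ i, normR N (r ^ flog r) (proj (E i) x)}

lemma le_Ssup (hN : IsSchlumprechtNorm N) {r : ℝ} (hr : 2 ≤ r) (x : c00) {l : ℕ} (hl : r ≤ l)
    (E : Fin l → Finset ℕ) (hE : ∀ i j : Fin l, i < j → FLt (E i) (E j)) :
    (flog l)⁻¹ * ∑ i, normR N (r ^ flog r) (proj (E i) x) ≤ Ssup N r x := by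
  apply le_csSup
  · refine ⟨N x, ?_⟩
    rintro s ⟨l, hl, E, hE, rfl⟩
    refine le_trans ?_ (sch_le_N hN x (two_le_of_real hr hl) E hE)
    have := flog_nat_pos (two_le_of_real hr hl)
    gcongr
    exact normR_le_N hN (two_le_rho hr) _
  · exact ⟨l, hl, E, hE, rfl⟩

lemma Ssup_nonneg {r : ℝ} (hr : 2 ≤ r) (x : c00) : 0 ≤ Ssup N r x := by
  apply Real.sSup_nonneg
  rintro s ⟨l, hl, E, hE, rfl⟩
  have := flog_nat_pos (two_le_of_real hr hl)
  exact mul_nonneg (by positivity) (Finset.sum_nonneg fun _ _ => normR_nonneg _ _)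

lemma sep_sum_le_S (hN : IsSchlumprechtNorm N) {r : ℝ} (hr : 2 ≤ r) (x : c00) {ι : Type*}
    (A : ι → Finset ℕ) (s : Finset ι)
    (hs : ∀ i ∈ s, ∀ j ∈ s, i ≠ j → FLt (A i) (A j) ∨ FLt (A j) (A i)) (n : ℕ) (hn : s.card ≤ n)
    (hrn : r ≤ n) : ∑ i ∈ s, normR N (r ^ flog r) (proj (A i) x) ≤ flog n * Ssup N r x := by
  obtain ⟨E, hE, h⟩ := toFin A (fun B => normR N (r ^ flog r) (proj B x))
    (by simp [proj_empty, normR_zero hN (two_le_rho hr)]) s hs n hn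
  rw [← h]
  have h1 := le_Ssup hN hr x hrn E hE
  have := flog_nat_pos (two_le_of_real hr hrn)
  rwa [inv_mul_le_iff₀ this] at h1

lemma char_aux (hN : IsSchlumprechtNorm N) {r : ℝ} (hr : 2 ≤ r) (x : c00) {l : ℕ} (hl : r ≤ l)
    (E : Fin l → Finset ℕ) (hE : ∀ i j : Fin l, i < j → FLt (E i) (E j)) :
    (flog l)⁻¹ * ∑ i, N (proj (E i) x) ≤
      (1 + 1 / Real.sqrt (flog r)) * Ssup N r x + 8 / Real.sqrt (flog r) * normR N r x := by
  have hF : 1 ≤ flog r := one_le_flog (by linarith)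
  set G := Real.sqrt (flog r) with hGdef
  have hG1 : 1 ≤ G := Real.one_le_sqrt.2 hF
  have hGsq : G * G = flog r := Real.mul_self_sqrt (by linarith)
  have hρ := two_le_rho hr
  set ρ := r ^ flog r with hρdef
  obtain ⟨n, hn⟩ := pow_unbounded_of_one_lt G flog_two_gt
  choose ι hι A g P h1 h2 h3 h4 h5 using fun i : Fin l => tree hN hρ x n G hn.le (E i)
  have hl2 := two_le_of_real hr hl
  have hl0 : (2:ℝ) ≤ l := by exact_mod_cast hl2
  have hfl := flog_nat_pos hl2
  have hFl : flog r ≤ flog l := flog_mono (by linarith) hl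
  set M := normR N r x
  set S := Ssup N r x
  have hM : 0 ≤ M := normR_nonneg _ _
  have hS : 0 ≤ S := Ssup_nonneg hr x
  -- global leaf family
  let κ := Σ i : Fin l, ι i
  let A' : κ → Finset ℕ := fun p => A p.1 p.2
  let g' : κ → ℝ := fun p => g p.1 p.2
  let P' : κ → ℝ := fun p => P p.1 p.2
  have hsep : ∀ p q : κ, p ≠ q → FLt (A' p) (A' q) ∨ FLt (A' q) (A' p) := by
    rintro ⟨i, j⟩ ⟨i', j'⟩ hne
    by_cases hii : i = i'
    · subst hii
      exact h2 i j j' (fun h => hne (by rw [h]))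
    · rcases lt_or_gt_of_ne hii with h | h
      · left; exact FLt_mono (hE i i' h) (h1 i j) (h1 i' j')
      · right; exact FLt_mono (hE i' i h) (h1 i' j') (h1 i j)
  have hg1 : ∀ p, 1 ≤ g' p := fun p => (h3 p.1 p.2).1
  have hP1 : ∀ p, 1 ≤ P' p := fun p => (h3 p.1 p.2).2.1
  have hPg : ∀ p, flog (P' p) ≤ g' p := fun p => (h3 p.1 p.2).2.2.1
  have hg5 : ∀ p, g' p ≤ G ^ 5 := by
    intro p
    refine (h3 p.1 p.2).2.2.2.1.trans (max_le (one_le_pow₀ hG1) ?_)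
    calc G * flog ρ ≤ G * (flog r * flog r) := by
          gcongr; exact flog_rpow_le hr
      _ = G ^ 5 := by rw [← hGsq]; ring
  have hgT : ∀ p, G ≤ g' p ∨ N (proj (A' p) x) ≤ normR N ρ (proj (A' p) x) :=
    fun p => (h3 p.1 p.2).2.2.2.2
  have hP : ∑ p, (P' p)⁻¹ ≤ l := by
    rw [Fintype.sum_sigma]
    calc _ ≤ ∑ i : Fin l, (1:ℝ) := Finset.sum_le_sum fun i _ => h4 i
      _ = l := by simp
  have hsum : ∑ i, N (proj (E i) x) ≤ ∑ p, (g' p)⁻¹ * N (proj (A' p) x) := by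
    rw [Fintype.sum_sigma]
    exact Finset.sum_le_sum fun i _ => h5 i
  -- counting
  have hcount : ∀ (t : ℝ), 0 ≤ t → ∀ s : Finset κ, (∀ p ∈ s, g' p ≤ t) →
      ∃ n : ℕ, s.card ≤ n ∧ r ≤ n ∧ flog n ≤ flog l + t := by
    intro t ht s hs
    have h2t : (1:ℝ) ≤ 2 ^ t := Real.one_le_rpow (by norm_num) ht
    have hc : (s.card : ℝ) ≤ l * 2 ^ t := by
      have : (s.card : ℝ) * ((2:ℝ) ^ t)⁻¹ ≤ l := by
        calc (s.card : ℝ) * ((2:ℝ) ^ t)⁻¹ = ∑ p ∈ s, ((2:ℝ) ^ t)⁻¹ := by simp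
          _ ≤ ∑ p ∈ s, (P' p)⁻¹ := by
              apply Finset.sum_le_sum; intro p hp
              have h1 := hP1 p
              apply inv_anti₀ (by linarith)
              have := (flog_le_iff (by linarith)).1 ((hPg p).trans (hs p hp))
              linarith
          _ ≤ ∑ p, (P' p)⁻¹ := by
              apply Finset.sum_le_univ_sum_of_nonneg
              intro p; have := hP1 p; positivity
          _ ≤ l := hP
      rwa [← div_eq_mul_inv, div_le_iff₀ (by positivity)] at this
    refine ⟨⌊(l:ℝ) * 2 ^ t⌋₊, Nat.le_floor hc, ?_, ?_⟩
    · refine hl.trans ?_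
      have : l ≤ ⌊(l:ℝ) * 2 ^ t⌋₊ := Nat.le_floor (by nlinarith)
      exact_mod_cast this
    · rw [flog_le_iff (by positivity), Real.rpow_add (by norm_num), two_rpow_flog (by linarith)]
      have := Nat.floor_le (show 0 ≤ (l:ℝ) * 2 ^ t by positivity)
      nlinarith
  classical
  -- terminal leaves
  let s0 : Finset κ := Finset.univ.filter fun p => g' p < G
  have hs0 : ∑ p ∈ s0, (g' p)⁻¹ * N (proj (A' p) x) ≤ (flog l + G) * S := by
    obtain ⟨n, hn1, hn2, hn3⟩ := hcount G (by linarith) s0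
      (fun p hp => ((Finset.mem_filter.1 hp).2).le)
    calc ∑ p ∈ s0, (g' p)⁻¹ * N (proj (A' p) x)
        ≤ ∑ p ∈ s0, normR N ρ (proj (A' p) x) := by
          apply Finset.sum_le_sum; intro p hp
          have hlt := (Finset.mem_filter.1 hp).2
          have hT := (hgT p).resolve_left (not_le.2 hlt)
          have : (g' p)⁻¹ ≤ 1 := inv_le_one_of_one_le₀ (hg1 p)
          have h0 := N_nonneg hN (proj (A' p) x)
          nlinarith
      _ ≤ flog n * S := sep_sum_le_S hN hr x A' s0 (fun i _ j _ => hsep i j) n hn1 hn2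
      _ ≤ _ := by gcongr
  let sc : ℕ → Finset κ := fun c => Finset.univ.filter fun p => G ^ (c+1) ≤ g' p ∧ g' p ≤ G ^ (c+2)
  have hsc : ∀ c, ∑ p ∈ sc c, (g' p)⁻¹ * N (proj (A' p) x) ≤ 2 * flog l / G * M := by
    intro c
    obtain ⟨n, hn1, hn2, hn3⟩ := hcount (G ^ (c+2)) (by positivity) (sc c)
      (fun p hp => ((Finset.mem_filter.1 hp).2).2)
    have hGc : G ≤ G ^ (c+1) := le_self_pow₀ hG1 (by omega)
    calc ∑ p ∈ sc c, (g' p)⁻¹ * N (proj (A' p) x)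
        ≤ ∑ p ∈ sc c, (G ^ (c+1))⁻¹ * N (proj (A' p) x) := by
          apply Finset.sum_le_sum; intro p hp
          have hlt := (Finset.mem_filter.1 hp).2.1
          have h0 := N_nonneg hN (proj (A' p) x)
          gcongr
      _ = (G ^ (c+1))⁻¹ * ∑ p ∈ sc c, N (proj (A' p) x) := by rw [Finset.mul_sum]
      _ ≤ (G ^ (c+1))⁻¹ * ((flog l + G ^ (c+2)) * M) := by
          gcongr
          refine (sep_sum_le hN hr x A' (sc c) (fun i _ j _ => hsep i j) n hn1 hn2).trans ?_
          exact mul_le_mul_of_nonneg_right hn3 hM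
      _ = (flog l * (G ^ (c+1))⁻¹ + G) * M := by
          field_simp
          ring
      _ ≤ (flog l * G⁻¹ + flog l * G⁻¹) * M := by
          gcongr
          rw [← div_eq_mul_inv, le_div_iff₀ (by linarith), hGsq]; exact hFl
      _ = _ := by ring
  have hcover : ∑ p, (g' p)⁻¹ * N (proj (A' p) x) ≤ ∑ p ∈ s0, (g' p)⁻¹ * N (proj (A' p) x) +
      ∑ c ∈ Finset.range 4, ∑ p ∈ sc c, (g' p)⁻¹ * N (proj (A' p) x) := by
    simp only [s0, sc, Finset.sum_filter]
    rw [Finset.sum_comm, ← Finset.sum_add_distrib]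
    apply Finset.sum_le_sum; intro p _
    have h0 : 0 ≤ (g' p)⁻¹ * N (proj (A' p) x) := by
      have := hg1 p; have := N_nonneg hN (proj (A' p) x); positivity
    by_cases hlt : g' p < G
    · rw [if_pos hlt]
      have : 0 ≤ ∑ c ∈ Finset.range 4, (if G ^ (c+1) ≤ g' p ∧ g' p ≤ G ^ (c+2) then
        (g' p)⁻¹ * N (proj (A' p) x) else 0) := by
        apply Finset.sum_nonneg; intro c _; split_ifs <;> linarith
      linarith
    · rw [if_neg hlt, zero_add]
      have hex : ∃ c ∈ Finset.range 4, G ^ (c+1) ≤ g' p ∧ g' p ≤ G ^ (c+2) := by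
        push Not at hlt
        by_cases a1 : g' p ≤ G ^ 2
        · exact ⟨0, by simp, by simpa using hlt, by simpa using a1⟩
        by_cases a2 : g' p ≤ G ^ 3
        · exact ⟨1, by simp, by simpa using (not_le.1 a1).le, by simpa using a2⟩
        by_cases a3 : g' p ≤ G ^ 4
        · exact ⟨2, by simp, by simpa using (not_le.1 a2).le, by simpa using a3⟩
        · exact ⟨3, by simp, by simpa using (not_le.1 a3).le, by simpa using hg5 p⟩
      obtain ⟨c, hc, hcc⟩ := hex
      refine le_trans ?_ (Finset.single_le_sum (f := fun c => if G ^ (c+1) ≤ g' p ∧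
        g' p ≤ G ^ (c+2) then (g' p)⁻¹ * N (proj (A' p) x) else 0) ?_ hc)
      · simp only [if_pos hcc]; exact le_rfl
      · intro c _; split_ifs <;> linarith
  have hfinal : ∑ i, N (proj (E i) x) ≤ (flog l + G) * S + 4 * (2 * flog l / G * M) := by
    refine hsum.trans (hcover.trans (add_le_add hs0 ?_))
    calc _ ≤ ∑ c ∈ Finset.range 4, 2 * flog l / G * M := Finset.sum_le_sum fun c _ => hsc c
      _ = _ := by simp
  rw [inv_mul_le_iff₀ hfl]
  refine hfinal.trans ?_
  have hGle : G ≤ flog l * (1 / G) := by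
    rw [mul_one_div, le_div_iff₀ (by linarith), hGsq]; exact hFl
  calc _ ≤ (flog l + flog l * (1 / G)) * S + 4 * (2 * flog l / G * M) := by gcongr
    _ = _ := by ring

lemma char_lemma (hN : IsSchlumprechtNorm N) (r : ℝ) (hr : 2 ≤ r) (hd : (9:ℝ) ^ 2 < flog r)
    (x : c00) (hx : normR N r x ≠ supNorm x) :
    normR N r x ≤ (1 - 9 / Real.sqrt (flog r))⁻¹ * Ssup N r x := by
  have hG : 9 < Real.sqrt (flog r) := Real.lt_sqrt_of_sq_lt hd
  have hS : 0 ≤ Ssup N r x := Ssup_nonneg hr x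
  have hM : 0 ≤ normR N r x := normR_nonneg _ _
  have haux := fun (l : ℕ) (hl : r ≤ l) => char_aux hN hr x hl
  set G := Real.sqrt (flog r)
  have key : normR N r x ≤ (1 + 1 / G) * Ssup N r x + 8 / G * normR N r x := by
    have e : normR N r x = sSup {s | ∃ l : ℕ, r ≤ (l : ℝ) ∧ s = normL N l x} := by
      rcases max_choice (supNorm x) (sSup {s | ∃ l : ℕ, r ≤ (l : ℝ) ∧ s = normL N l x}) with h | h
      · exact absurd h hx
      · exact h
    conv_lhs => rw [e]
    apply Real.sSup_le
    · rintro s ⟨l, hl, rfl⟩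
      exact normL_le hN (haux l hl)
    · have : 0 < G := by linarith
      positivity
  have hu : 0 < 1 / G := by positivity
  have hu9 : 9 / G < 1 := by rw [div_lt_one (by linarith)]; exact hG
  rw [← div_eq_inv_mul, le_div_iff₀ (by linarith)]
  set u := 1 / G with hudef
  have e9 : 9 / G = 9 * u := by rw [hudef]; ring
  have e8 : 8 / G = 8 * u := by rw [hudef]; ring
  rw [e8] at key
  rw [e9] at hu9 ⊢
  -- M (1-8u) ≤ (1+u) S, want M (1-9u) ≤ S
  have h1 : normR N r x * (1 - 8 * u) ≤ (1 + u) * Ssup N r x := by linarith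
  have h2 : (1 - 9 * u) * (1 + u) ≤ 1 - 8 * u := by nlinarith
  have h3 : normR N r x * ((1 - 9 * u) * (1 + u)) ≤ (1 + u) * Ssup N r x :=
    (mul_le_mul_of_nonneg_left h2 hM).trans h1
  have h4 : (1 + u) * (normR N r x * (1 - 9 * u)) ≤ (1 + u) * Ssup N r x := by linarith
  exact le_of_mul_le_mul_left h4 (by linarith)

end treepart

section products

/-- the threshold `R` -/
noncomputable def bigR : ℝ := (2:ℝ) ^ (400:ℝ)

lemma bigR_ge : 512 ≤ bigR := by
  have : (2:ℝ) ^ (9:ℝ) ≤ bigR := Real.rpow_le_rpow_of_exponent_le (by norm_num) (by norm_num)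
  have e : (2:ℝ) ^ (9:ℝ) = 512 := by
    rw [show (9:ℝ) = ((9:ℕ):ℝ) by norm_num, Real.rpow_natCast]; norm_num
  linarith

lemma logb_ge_of_bigR {r : ℝ} (hr : bigR ≤ r) : 400 ≤ Real.logb 2 r := by
  rw [Real.le_logb_iff_rpow_le (by norm_num) (by linarith [bigR_ge])]
  exact hr

lemma flog_ge_of_bigR {r : ℝ} (hr : bigR ≤ r) : 400 ≤ flog r := by
  refine (logb_ge_of_bigR hr).trans ?_
  unfold flog
  exact Real.logb_le_logb_of_le (by norm_num) (by linarith [bigR_ge]) (by linarith)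

lemma next_ge_bigR {r : ℝ} (hr : bigR ≤ r) : bigR ≤ r ^ flog r :=
  hr.trans (Real.self_le_rpow_of_one_le (by linarith [bigR_ge]) (by linarith [flog_ge_of_bigR hr]))

lemma flog_next {r : ℝ} (hr : bigR ≤ r) : 4 * flog r ≤ flog (r ^ flog r) := by
  have h0 : 0 < r := by linarith [bigR_ge]
  have h1 : Real.logb 2 (r ^ flog r) ≤ flog (r ^ flog r) := by
    conv_rhs => unfold flog
    have : 0 < r ^ flog r := by positivity
    exact Real.logb_le_logb_of_le (by norm_num) this (by unfold flog; linarith)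
  refine le_trans ?_ h1
  rw [Real.logb_rpow_eq_mul_logb_of_pos h0]
  nlinarith [logb_ge_of_bigR hr, flog_ge_of_bigR hr]

lemma rseq_succ (r : ℝ) (k : ℕ) : rseq r (k + 1) = rseq (r ^ flog r) k := by
  induction k with
  | zero => rfl
  | succ k ih =>
    have : rseq r (k + 1 + 1) = rseq r (k + 1) ^ flog (rseq r (k + 1)) := rfl
    rw [this, ih]; rfl

lemma rseq_ge {r : ℝ} (hr : bigR ≤ r) (k : ℕ) : bigR ≤ rseq r k ∧ 4 ^ k ≤ flog (rseq r k) := by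
  induction k with
  | zero =>
    have : rseq r 0 = r := rfl
    rw [this]; exact ⟨hr, by linarith [flog_ge_of_bigR hr]⟩
  | succ k ih =>
    have : rseq r (k + 1) = rseq r k ^ flog (rseq r k) := rfl
    rw [this]
    exact ⟨next_ge_bigR ih.1, by rw [pow_succ]; linarith [flog_next ih.1, ih.2]⟩

/-- one factor of the product `β` -/
noncomputable def bfac (r : ℝ) : ℝ :=
  (1 - 9 / Real.sqrt (flog r))⁻¹ * (flog (9 * r) / flog r)

lemma bfac_bounds {r : ℝ} (hr : bigR ≤ r) :
    1 ≤ bfac r ∧ bfac r ≤ 1 + 20 * (1 / Real.sqrt (flog r)) := by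
  have hF := flog_ge_of_bigR hr
  have hR := bigR_ge
  have hG : 20 ≤ Real.sqrt (flog r) := Real.le_sqrt_of_sq_le (by linarith)
  have hGsq : Real.sqrt (flog r) * Real.sqrt (flog r) = flog r := Real.mul_self_sqrt (by linarith)
  unfold bfac
  set G := Real.sqrt (flog r)
  have e9 : 9 / G = 9 * (1 / G) := by ring
  rw [e9]
  set u := 1 / G with hu
  have hu0 : 0 < u := by positivity
  have hu1 : u ≤ 1 / 20 := one_div_le_one_div_of_le (by norm_num) hG
  have huF : 1 / flog r = u * u := by rw [← hGsq, hu]; field_simp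
  have hv1 : 1 ≤ flog (9 * r) / flog r := by
    rw [one_le_div (by linarith)]; exact flog_mono (by linarith) (by linarith)
  have hv2 : flog (9 * r) / flog r ≤ 1 + 4 * (u * u) := by
    rw [← huF, div_le_iff₀ (by linarith)]
    have : flog (9 * r) ≤ flog r + 4 := by
      rw [flog_le_iff (by linarith), Real.rpow_add (by norm_num), two_rpow_flog (by linarith)]
      have e : (2:ℝ) ^ (4:ℝ) = 16 := by
        rw [show (4:ℝ) = ((4:ℕ):ℝ) by norm_num, Real.rpow_natCast]; norm_num
      rw [e]; linarith
    have h4 : (1 + 4 * (1 / flog r)) * flog r = flog r + 4 := by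
      have : flog r ≠ 0 := by linarith
      field_simp
    linarith
  have hw1 : 1 ≤ (1 - 9 * u)⁻¹ := (one_le_inv₀ (by linarith)).2 (by linarith)
  have hw2 : (1 - 9 * u)⁻¹ ≤ 1 + 18 * u := by
    rw [inv_le_iff_one_le_mul₀ (by linarith)]
    nlinarith
  constructor
  · exact one_le_mul_of_one_le_of_one_le hw1 hv1
  · calc _ ≤ (1 + 18 * u) * (1 + 4 * (u * u)) := by gcongr
      _ ≤ 1 + 20 * u := by nlinarith [mul_pos hu0 hu0, mul_pos (mul_pos hu0 hu0) hu0]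

lemma bfac_multipliable {r : ℝ} (hr : bigR ≤ r) : Multipliable fun k => bfac (rseq r k) := by
  have e : (fun k => bfac (rseq r k)) = fun k => 1 + (bfac (rseq r k) - 1) := by
    ext k; ring
  rw [e]
  apply Real.multipliable_one_add_of_summable
  apply Summable.of_nonneg_of_le (f := fun k : ℕ => 20 * (1 / 2 : ℝ) ^ k)
  · intro k; linarith [(bfac_bounds (rseq_ge hr k).1).1]
  · intro k
    have h1 := (bfac_bounds (rseq_ge hr k).1).2
    have h2 : (2:ℝ) ^ k ≤ Real.sqrt (flog (rseq r k)) := by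
      apply Real.le_sqrt_of_sq_le
      rw [← pow_mul, mul_comm, pow_mul]
      norm_num
      exact (rseq_ge hr k).2
    have h3 : 1 / Real.sqrt (flog (rseq r k)) ≤ (1 / 2 : ℝ) ^ k := by
      rw [one_div_pow]
      exact one_div_le_one_div_of_le (by positivity) h2
    linarith
  · exact (summable_geometric_of_lt_one (by norm_num) (by norm_num)).mul_left _

/-- the infinite product -/
noncomputable def beta (r : ℝ) : ℝ := ∏' k, bfac (rseq r k)

lemma beta_eq {r : ℝ} (hr : bigR ≤ r) : beta r = bfac r * beta (r ^ flog r) := by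
  unfold beta
  have h := bfac_multipliable (next_ge_bigR hr)
  rw [tprod_eq_zero_mul' (f := fun k => bfac (rseq r k)) (by simpa only [rseq_succ] using h)]
  simp only [rseq_succ]
  rfl

lemma one_le_beta {r : ℝ} (hr : bigR ≤ r) : 1 ≤ beta r := by
  have h := (bfac_multipliable hr).hasProd
  refine ge_of_tendsto h (Filter.Eventually.of_forall fun s => ?_)
  exact Finset.prod_induction _ (fun x => (1:ℝ) ≤ x)
    (fun a b ha hb => one_le_mul_of_one_le_of_one_le ha hb) le_rfl
    (fun k _ => (bfac_bounds (rseq_ge hr k).1).1)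

end products

section blocks

variable {N : c00 → ℝ}

lemma proj_esum (α : ℕ → ℝ) (Q I : Finset ℕ) (h : Q ⊆ I) :
    proj Q (∑ j ∈ I, α j • (Finsupp.single j (1:ℝ) : c00)) =
      ∑ j ∈ Q, α j • (Finsupp.single j (1:ℝ) : c00) := by
  ext i
  rw [proj_apply, Finsupp.finsetSum_apply, Finsupp.finsetSum_apply]
  simp only [Finsupp.smul_apply, Finsupp.single_apply, smul_eq_mul, mul_ite, mul_one, mul_zero]
  rw [Finset.sum_ite_eq', Finset.sum_ite_eq']
  by_cases hi : i ∈ Q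
  · simp [hi, h hi]
  · simp [hi]

lemma normR_sum (hN : IsSchlumprechtNorm N) {r : ℝ} (hr : 2 ≤ r) {ι : Type*} (s : Finset ι)
    (x : ι → c00) : normR N r (∑ i ∈ s, x i) ≤ ∑ i ∈ s, normR N r (x i) := by
  classical
  induction s using Finset.induction_on with
  | empty => simp [normR_zero hN hr]
  | insert a s ha ih =>
    rw [Finset.sum_insert ha, Finset.sum_insert ha]
    exact (normR_add hN hr _ _).trans (by linarith)

lemma FLt_empty_left (A : Finset ℕ) : FLt ∅ A := fun a ha => by simp at ha

lemma FLt_empty_right (A : Finset ℕ) : FLt A ∅ := fun _ _ b hb => by simp at hb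

/-- the per-piece decomposition -/
lemma piece (hN : IsSchlumprechtNorm N) {r1 β1 : ℝ} (hr1 : 2 ≤ r1) (hβ : 1 ≤ β1)
    (α ε : ℕ → ℝ) (y : ℕ → c00) (c b : ℕ)
    (IH : ∀ p q : ℕ, c ≤ p → p ≤ q → q ≤ b → ∃ i0 ∈ Finset.Icc p q,
      normR N r1 (∑ j ∈ Finset.Icc p q, α j • y j) ≤ β1 * (|α i0| +
        N (∑ j ∈ Finset.Icc (i0 + 1) q, α j • (Finsupp.single j (1:ℝ) : c00)) +
        ∑ j ∈ Finset.Icc p q, ε j * |α j|)) (E : Finset ℕ) :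
    ∃ Cs J P Q : Finset ℕ,
      (∀ j ∈ Cs, j ∈ Finset.Icc c b ∧ (E ∩ (y j).support).Nonempty) ∧ Cs.card ≤ 2 ∧
      J ⊆ Finset.Icc c b ∧ P ⊆ J ∧ Q ⊆ J ∧ FLt P Q ∧
      (∀ j ∈ J, (∃ f ∈ Cs, f < j) ∧ (∃ l ∈ Cs, j < l)) ∧
      (∀ t ∈ Cs, (∀ j ∈ J, t < j) ∨ (∀ j ∈ J, j < t)) ∧
      normR N r1 (proj E (∑ j ∈ Finset.Icc c b, α j • y j)) ≤
        ∑ j ∈ Cs, |α j| * N (proj E (y j)) + β1 * (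
          N (proj P (∑ j ∈ Finset.Icc c b, α j • (Finsupp.single j (1:ℝ) : c00))) +
          N (proj Q (∑ j ∈ Finset.Icc c b, α j • (Finsupp.single j (1:ℝ) : c00))) +
          ∑ j ∈ J, ε j * |α j|) := by
  classical
  set T := (Finset.Icc c b).filter (fun j => (E ∩ (y j).support).Nonempty) with hT
  have hzero : ∀ j ∈ Finset.Icc c b, j ∉ T → proj E (y j) = 0 := by
    intro j hj hjT
    have : E ∩ (y j).support = ∅ := by
      by_contra h
      exact hjT (Finset.mem_filter.2 ⟨hj, Finset.nonempty_iff_ne_empty.2 h⟩)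
    rw [← proj_support, this, proj_empty]
  have hX : proj E (∑ j ∈ Finset.Icc c b, α j • y j) = ∑ j ∈ Finset.Icc c b, α j • proj E (y j) := by
    rw [proj_sum]; simp only [proj_smul]
  by_cases hTe : T.Nonempty
  swap
  · rw [Finset.not_nonempty_iff_eq_empty] at hTe
    refine ⟨∅, ∅, ∅, ∅, by simp, by simp, by simp, by simp, by simp, FLt_empty_left _, by simp,
      by simp, ?_⟩
    rw [hX, Finset.sum_eq_zero, normR_zero hN hr1]
    · simp [proj_empty, N_zero hN]
    · intro j hj; rw [hzero j hj (by simp [hTe]), smul_zero]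
  · set f := T.min' hTe with hf
    set l := T.max' hTe with hl
    have hfT : f ∈ T := T.min'_mem hTe
    have hlT : l ∈ T := T.max'_mem hTe
    have hfl : f ≤ l := T.min'_le _ hlT
    have hfm := Finset.mem_filter.1 hfT
    have hlm := Finset.mem_filter.1 hlT
    have hfI := Finset.mem_Icc.1 hfm.1
    have hlI := Finset.mem_Icc.1 hlm.1
    have hJsub : Finset.Ioo f l ⊆ Finset.Icc c b := by
      intro j hj; rw [Finset.mem_Ioo] at hj; rw [Finset.mem_Icc]; omega
    -- decomposition of the vector
    have hsplit : proj E (∑ j ∈ Finset.Icc c b, α j • y j) =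
        ∑ j ∈ ({f, l} : Finset ℕ), α j • proj E (y j) +
          proj E (∑ j ∈ Finset.Ioo f l, α j • y j) := by
      have hd : Disjoint ({f, l} : Finset ℕ) (Finset.Ioo f l) := by
        rw [Finset.disjoint_left]; intro j hj hj2
        simp only [Finset.mem_insert, Finset.mem_singleton] at hj
        rw [Finset.mem_Ioo] at hj2; omega
      rw [hX, proj_sum]; simp only [proj_smul]
      rw [← Finset.sum_union hd]
      symm
      apply Finset.sum_subset
      · intro j hj
        rw [Finset.mem_union] at hj
        rcases hj with hj | hj
        · simp only [Finset.mem_insert, Finset.mem_singleton] at hj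
          rw [Finset.mem_Icc]; omega
        · exact hJsub hj
      · intro j hj hjn
        rw [hzero j hj, smul_zero]
        intro hjT
        apply hjn
        have h1 := T.min'_le _ hjT
        have h2 := T.le_max' _ hjT
        rw [Finset.mem_union, Finset.mem_Ioo]
        simp only [Finset.mem_insert, Finset.mem_singleton]
        omega
    have hfirst : normR N r1 (∑ j ∈ ({f, l} : Finset ℕ), α j • proj E (y j)) ≤
        ∑ j ∈ ({f, l} : Finset ℕ), |α j| * N (proj E (y j)) := by
      refine (normR_sum hN hr1 _ _).trans (Finset.sum_le_sum fun j _ => ?_)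
      rw [← N_smul hN]; exact normR_le_N hN hr1 _
    have hcs : ∀ j ∈ ({f, l} : Finset ℕ),
        j ∈ Finset.Icc c b ∧ (E ∩ (y j).support).Nonempty := by
      intro j hj
      simp only [Finset.mem_insert, Finset.mem_singleton] at hj
      rcases hj with rfl | rfl
      · exact hfm
      · exact hlm
    have hcs2 : ∀ t ∈ ({f, l} : Finset ℕ), (∀ j ∈ Finset.Ioo f l, t < j) ∨
        (∀ j ∈ Finset.Ioo f l, j < t) := by
      intro j hj
      simp only [Finset.mem_insert, Finset.mem_singleton] at hj
      rcases hj with h | h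
      · left; intro i hi; rw [Finset.mem_Ioo] at hi; omega
      · right; intro i hi; rw [Finset.mem_Ioo] at hi; omega
    have hJ2 : ∀ j ∈ Finset.Ioo f l, (∃ f' ∈ ({f, l} : Finset ℕ), f' < j) ∧
        (∃ l' ∈ ({f, l} : Finset ℕ), j < l') := by
      intro j hj
      rw [Finset.mem_Ioo] at hj
      exact ⟨⟨f, by simp, hj.1⟩, ⟨l, by simp, hj.2⟩⟩
    have hmid : ∃ P Q : Finset ℕ, P ⊆ Finset.Ioo f l ∧ Q ⊆ Finset.Ioo f l ∧ FLt P Q ∧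
        normR N r1 (∑ j ∈ Finset.Ioo f l, α j • y j) ≤ β1 * (
          N (proj P (∑ j ∈ Finset.Icc c b, α j • (Finsupp.single j (1:ℝ) : c00))) +
          N (proj Q (∑ j ∈ Finset.Icc c b, α j • (Finsupp.single j (1:ℝ) : c00))) +
          ∑ j ∈ Finset.Ioo f l, ε j * |α j|) := by
      by_cases hlt : f + 1 ≤ l - 1
      · obtain ⟨i0, hi0, hle⟩ := IH (f + 1) (l - 1) (by omega) hlt (by omega)
        have hIJ : Finset.Icc (f + 1) (l - 1) = Finset.Ioo f l := by
          ext j; rw [Finset.mem_Icc, Finset.mem_Ioo]; omega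
        rw [hIJ] at hle hi0
        have hi0' := Finset.mem_Ioo.1 hi0
        have hQ : Finset.Icc (i0 + 1) (l - 1) ⊆ Finset.Ioo f l := by
          intro j hj; rw [Finset.mem_Icc] at hj; rw [Finset.mem_Ioo]; omega
        have hP : ({i0} : Finset ℕ) ⊆ Finset.Ioo f l := by simpa using hi0
        refine ⟨{i0}, Finset.Icc (i0 + 1) (l - 1), hP, hQ, ?_, ?_⟩
        · intro i hi j hj
          rw [Finset.mem_singleton] at hi; rw [Finset.mem_Icc] at hj; omega
        · rw [proj_esum α _ _ (hP.trans hJsub), proj_esum α _ _ (hQ.trans hJsub),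
            Finset.sum_singleton, N_smul_single hN]
          exact hle
      · have hemp : Finset.Ioo f l = ∅ := by
          ext j; rw [Finset.mem_Ioo]; simp; omega
        refine ⟨∅, ∅, by simp, by simp, FLt_empty_left _, ?_⟩
        rw [hemp]; simp [proj_empty, N_zero hN, normR_zero hN hr1]
    obtain ⟨P, Q, hP, hQ, hPQ, hle⟩ := hmid
    refine ⟨{f, l}, Finset.Ioo f l, P, Q, hcs, Finset.card_le_two, hJsub, hP, hQ, hPQ, hJ2, hcs2, ?_⟩
    rw [hsplit]
    exact (normR_add hN hr1 _ _).trans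
      (add_le_add hfirst ((normR_proj hN hr1 _ _).trans hle))

lemma tail_est (hN : IsSchlumprechtNorm N) {r1 β1 : ℝ} (hr1 : 2 ≤ r1) (hβ : 1 ≤ β1)
    (α ε : ℕ → ℝ) (y : ℕ → c00) (c b : ℕ)
    (hε : ∀ j ∈ Finset.Icc c b, 0 < ε j)
    (hy : ∀ j ∈ Finset.Icc c b, ∀ j' ∈ Finset.Icc c b, j < j' →
      FLt (y j).support (y j').support)
    (IH : ∀ p q : ℕ, c ≤ p → p ≤ q → q ≤ b → ∃ i0 ∈ Finset.Icc p q,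
      normR N r1 (∑ j ∈ Finset.Icc p q, α j • y j) ≤ β1 * (|α i0| +
        N (∑ j ∈ Finset.Icc (i0 + 1) q, α j • (Finsupp.single j (1:ℝ) : c00)) +
        ∑ j ∈ Finset.Icc p q, ε j * |α j|))
    {l : ℕ} (hl : 2 ≤ l) (E : Fin l → Finset ℕ) (hE : ∀ i j : Fin l, i < j → FLt (E i) (E j))
    (hcut : ∀ j ∈ Finset.Icc c b, ∑ i, N (proj (E i) (y j)) ≤ 1 + ε j) :
    ∑ i, normR N r1 (proj (E i) (∑ j ∈ Finset.Icc c b, α j • y j)) ≤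
      β1 * (flog ((4 * l : ℕ) : ℝ) *
        N (∑ j ∈ Finset.Icc c b, α j • (Finsupp.single j (1:ℝ) : c00)) +
        ∑ j ∈ Finset.Icc c b, ε j * |α j|) := by
  classical
  choose Cs J P Q h1 h2 h3 h4 h5 h6 h7 h8 h9 using fun i => piece hN hr1 hβ α ε y c b IH (E i)
  set z := ∑ j ∈ Finset.Icc c b, α j • (Finsupp.single j (1:ℝ) : c00) with hz
  -- ordering of touched indices
  have hT : ∀ i i', i < i' → ∀ t ∈ Cs i, ∀ t' ∈ Cs i', t ≤ t' := by
    intro i i' hii t ht t' ht'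
    by_contra hlt
    push Not at hlt
    obtain ⟨m1, ⟨e, he⟩⟩ := h1 i t ht
    obtain ⟨m2, ⟨e', he'⟩⟩ := h1 i' t' ht'
    rw [Finset.mem_inter] at he he'
    have a1 := hE i i' hii e he.1 e' he'.1
    have a2 := hy t' m2 t m1 hlt e' he'.2 e he.2
    omega
  have hJC : ∀ i i', i < i' → FLt (J i) (Cs i') := by
    intro i i' hii j hj t ht
    obtain ⟨_, ⟨m, hm, hjm⟩⟩ := h7 i j hj
    have := hT i i' hii m hm t ht
    omega
  have hCJ : ∀ i i', i < i' → FLt (Cs i) (J i') := by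
    intro i i' hii t ht j hj
    obtain ⟨⟨m, hm, hjm⟩, _⟩ := h7 i' j hj
    have := hT i i' hii t ht m hm
    omega
  have hJJ : ∀ i i', i < i' → FLt (J i) (J i') := by
    intro i i' hii j hj j' hj'
    obtain ⟨⟨m, hm, hjm⟩, _⟩ := h7 i' j' hj'
    have := hJC i i' hii j hj m hm
    omega
  set C := Finset.univ.biUnion Cs with hC
  have hCsub : C ⊆ Finset.Icc c b := by
    intro t ht
    obtain ⟨i, _, hi⟩ := Finset.mem_biUnion.1 ht
    exact (h1 i t hi).1
  have hCcard : C.card ≤ 2 * l := by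
    calc C.card ≤ ∑ i : Fin l, (Cs i).card := Finset.card_biUnion_le
      _ ≤ ∑ i : Fin l, 2 := Finset.sum_le_sum fun i _ => h2 i
      _ = 2 * l := by simp [mul_comm]
  have hCJsep : ∀ t ∈ C, ∀ i, FLt {t} (J i) ∨ FLt (J i) {t} := by
    intro t ht i
    obtain ⟨i', _, hi'⟩ := Finset.mem_biUnion.1 ht
    have hs : ({t} : Finset ℕ) ⊆ Cs i' := by simpa using hi'
    rcases lt_trichotomy i i' with h | h | h
    · right; exact FLt_mono (hJC i i' h) subset_rfl hs
    · subst h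
      rcases h8 i t hi' with h | h
      · left; intro a ha j hj; rw [Finset.mem_singleton] at ha; rw [ha]; exact h j hj
      · right; intro j hj a ha; rw [Finset.mem_singleton] at ha; rw [ha]; exact h j hj
    · left; exact FLt_mono (hCJ i' i h) hs subset_rfl
  -- the family
  let A : ℕ ⊕ (Fin l ⊕ Fin l) → Finset ℕ := Sum.elim (fun j => {j}) (Sum.elim P Q)
  let s : Finset (ℕ ⊕ (Fin l ⊕ Fin l)) := C.disjSum Finset.univ
  have hscard : s.card ≤ 4 * l := by
    simp only [s, Finset.card_disjSum, Finset.card_univ, Fintype.card_sum, Fintype.card_fin]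
    omega
  have hJJsep : ∀ i i', i ≠ i' → ∀ X ⊆ J i, ∀ Y ⊆ J i', FLt X Y ∨ FLt Y X := by
    intro i i' hne X hX Y hY
    rcases lt_or_gt_of_ne hne with h | h
    · left; exact FLt_mono (hJJ i i' h) hX hY
    · right; exact FLt_mono (hJJ i' i h) hY hX
  have hCX : ∀ t ∈ C, ∀ i, ∀ X ⊆ J i, FLt {t} X ∨ FLt X {t} := by
    intro t ht i X hX
    rcases hCJsep t ht i with h | h
    · left; exact FLt_mono h subset_rfl hX
    · right; exact FLt_mono h hX subset_rfl
  have hssep : ∀ p ∈ s, ∀ q ∈ s, p ≠ q → FLt (A p) (A q) ∨ FLt (A q) (A p) := by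
    rintro (t | i | i) hp (t' | i' | i') hq hne
    · have : t ≠ t' := fun h => hne (by rw [h])
      rcases lt_or_gt_of_ne this with h | h
      · left; intro a ha b hb
        simp only [A, Sum.elim_inl, Finset.mem_singleton] at ha hb; omega
      · right; intro a ha b hb
        simp only [A, Sum.elim_inl, Finset.mem_singleton] at ha hb; omega
    · exact hCX t (Finset.inl_mem_disjSum.1 hp) i' _ (h4 i')
    · exact hCX t (Finset.inl_mem_disjSum.1 hp) i' _ (h5 i')
    · exact (hCX t' (Finset.inl_mem_disjSum.1 hq) i _ (h4 i)).symm
    · exact hJJsep i i' (fun h => hne (by rw [h])) _ (h4 i) _ (h4 i')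
    · by_cases h : i = i'
      · subst h; exact Or.inl (h6 i)
      · exact hJJsep i i' h _ (h4 i) _ (h5 i')
    · exact (hCX t' (Finset.inl_mem_disjSum.1 hq) i _ (h5 i)).symm
    · by_cases h : i = i'
      · subst h; exact Or.inr (h6 i)
      · exact hJJsep i i' h _ (h5 i) _ (h4 i')
    · exact hJJsep i i' (fun h => hne (by rw [h])) _ (h5 i) _ (h5 i')
  have hfam : ∑ t ∈ C, |α t| + (∑ i, N (proj (P i) z) + ∑ i, N (proj (Q i) z)) ≤
      flog ((4 * l : ℕ) : ℝ) * N z := by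
    have h := sep_sum_le hN (le_refl (2:ℝ)) z A s hssep (4 * l) hscard
      (by exact_mod_cast (by omega : 2 ≤ 4 * l))
    have h' := h.trans (mul_le_mul_of_nonneg_left (normR_le_N hN (le_refl 2) z)
      (flog_nat_pos (by omega : 2 ≤ 4 * l)).le)
    simp only [s, Finset.sum_disjSum, Fintype.sum_sum_type, A, Sum.elim_inl, Sum.elim_inr] at h'
    refine le_trans (le_of_eq ?_) h'
    congr 1
    apply Finset.sum_congr rfl; intro t ht
    rw [hz, proj_esum α {t} _ (by simpa using hCsub ht), Finset.sum_singleton, N_smul_single hN]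
  -- the cut terms
  have hcutsum : ∑ i, ∑ j ∈ Cs i, |α j| * N (proj (E i) (y j)) ≤
      ∑ t ∈ C, |α t| + ∑ t ∈ C, ε t * |α t| := by
    calc ∑ i, ∑ j ∈ Cs i, |α j| * N (proj (E i) (y j))
        ≤ ∑ i, ∑ j ∈ C, |α j| * N (proj (E i) (y j)) := by
          apply Finset.sum_le_sum; intro i _
          apply Finset.sum_le_sum_of_subset_of_nonneg
          · exact Finset.subset_biUnion_of_mem Cs (Finset.mem_univ i)
          · intro j _ _; exact mul_nonneg (abs_nonneg _) (N_nonneg hN _)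
      _ = ∑ j ∈ C, |α j| * ∑ i, N (proj (E i) (y j)) := by
          rw [Finset.sum_comm]; apply Finset.sum_congr rfl; intro j _; rw [Finset.mul_sum]
      _ ≤ ∑ j ∈ C, |α j| * (1 + ε j) := by
          apply Finset.sum_le_sum; intro j hj
          exact mul_le_mul_of_nonneg_left (hcut j (hCsub hj)) (abs_nonneg _)
      _ = _ := by
          rw [← Finset.sum_add_distrib]; apply Finset.sum_congr rfl; intro j _; ring
  -- the epsilon terms
  have heps : ∑ t ∈ C, ε t * |α t| + ∑ i, ∑ j ∈ J i, ε j * |α j| ≤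
      ∑ j ∈ Finset.Icc c b, ε j * |α j| := by
    have hnot : ∀ X Y : Finset ℕ, (FLt X Y ∨ FLt Y X) → Disjoint X Y := by
      intro X Y h
      rw [Finset.disjoint_left]; intro a ha hb
      rcases h with h | h
      · exact lt_irrefl _ (h a ha a hb)
      · exact lt_irrefl _ (h a hb a ha)
    rw [← Finset.sum_biUnion (s := Finset.univ) (t := J), ← Finset.sum_union]
    · apply Finset.sum_le_sum_of_subset_of_nonneg
      · apply Finset.union_subset hCsub
        intro j hj
        obtain ⟨i, _, hi⟩ := Finset.mem_biUnion.1 hj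
        exact h3 i hi
      · intro j hj _; exact mul_nonneg (hε j hj).le (abs_nonneg _)
    · rw [Finset.disjoint_left]; intro t ht htJ
      obtain ⟨i, _, hi⟩ := Finset.mem_biUnion.1 htJ
      have := hnot _ _ (hCJsep t ht i)
      rw [Finset.disjoint_singleton_left] at this
      exact this hi
    · intro i _ i' _ hne
      exact hnot _ _ (hJJsep i i' hne _ subset_rfl _ subset_rfl)
  have hCnn : 0 ≤ ∑ t ∈ C, |α t| + ∑ t ∈ C, ε t * |α t| := by
    apply add_nonneg
    · exact Finset.sum_nonneg fun _ _ => abs_nonneg _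
    · exact Finset.sum_nonneg fun j hj => mul_nonneg (hε j (hCsub hj)).le (abs_nonneg _)
  calc _ ≤ ∑ i, (∑ j ∈ Cs i, |α j| * N (proj (E i) (y j)) + β1 * (
          N (proj (P i) z) + N (proj (Q i) z) + ∑ j ∈ J i, ε j * |α j|)) :=
        Finset.sum_le_sum fun i _ => h9 i
    _ = ∑ i, ∑ j ∈ Cs i, |α j| * N (proj (E i) (y j)) + β1 * (
          ∑ i, N (proj (P i) z) + ∑ i, N (proj (Q i) z) + ∑ i, ∑ j ∈ J i, ε j * |α j|) := by
        rw [Finset.sum_add_distrib, ← Finset.mul_sum, Finset.sum_add_distrib,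
          Finset.sum_add_distrib]
    _ ≤ β1 * (∑ t ∈ C, |α t| + ∑ t ∈ C, ε t * |α t|) + β1 * (
          ∑ i, N (proj (P i) z) + ∑ i, N (proj (Q i) z) + ∑ i, ∑ j ∈ J i, ε j * |α j|) := by
        gcongr
        exact hcutsum.trans (le_mul_of_one_le_left hCnn hβ)
    _ = β1 * ((∑ t ∈ C, |α t| + (∑ i, N (proj (P i) z) + ∑ i, N (proj (Q i) z))) +
          (∑ t ∈ C, ε t * |α t| + ∑ i, ∑ j ∈ J i, ε j * |α j|)) := by ring
    _ ≤ _ := by gcongr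

end blocks

section final

variable {N : c00 → ℝ}

lemma blk_lt (hN : IsSchlumprechtNorm N) {y : ℕ → c00} (h1 : ∀ n, 1 ≤ n → N (y n) = 1)
    (hb : ∀ n, 1 ≤ n → ∀ i ∈ (y n).support, ∀ j ∈ (y (n + 1)).support, i < j)
    {j : ℕ} (hj : 1 ≤ j) : ∀ j' : ℕ, j < j' → FLt (y j).support (y j').support := by
  intro j' hjj
  induction j', hjj using Nat.le_induction with
  | base => exact fun a ha b hb' => hb j hj a ha b hb'
  | succ n hn ih =>
    intro a ha b hb'
    have hn1 : 1 ≤ n := by omega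
    have hne : (y n).support.Nonempty := by
      rw [Finsupp.support_nonempty_iff]
      intro h0
      have := h1 n hn1
      rw [h0, N_zero hN] at this
      norm_num at this
    obtain ⟨c, hc⟩ := hne
    exact (ih a ha c hc).trans (hb n hn1 c hc b hb')

lemma abs_coord_le (hN : IsSchlumprechtNorm N) {x : c00} (h1 : N x = 1) (i : ℕ) : |x i| ≤ 1 :=
  (le_supNorm x i).trans ((supNorm_le_N hN x).trans h1.le)

lemma sum_le_card (hN : IsSchlumprechtNorm N) {x : c00} (h1 : N x = 1) {l : ℕ}
    (E : Fin l → Finset ℕ) (hE : ∀ i j : Fin l, i < j → FLt (E i) (E j)) :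
    ∑ i, N (proj (E i) x) ≤ (x.support.card : ℝ) := by
  classical
  have hp : ∀ i, N (proj (E i) x) ≤ ∑ a ∈ E i ∩ x.support, (1:ℝ) := by
    intro i
    have := N_le_l1 hN (proj (E i) x) (E i ∩ x.support) (by
      intro a ha
      rw [Finsupp.mem_support_iff, proj_apply] at ha
      rw [Finset.mem_inter, Finsupp.mem_support_iff]
      by_cases h : a ∈ E i
      · rw [if_pos h] at ha; exact ⟨h, ha⟩
      · rw [if_neg h] at ha; exact absurd rfl ha)
    refine this.trans (Finset.sum_le_sum fun a _ => ?_)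
    rw [proj_apply]
    split_ifs
    · exact abs_coord_le hN h1 a
    · simp
  refine (Finset.sum_le_sum fun i _ => hp i).trans ?_
  rw [← Finset.sum_biUnion]
  · rw [Finset.sum_const, nsmul_eq_mul, mul_one]
    have : (Finset.univ.biUnion fun i => E i ∩ x.support) ⊆ x.support := by
      intro a ha
      obtain ⟨i, _, hi⟩ := Finset.mem_biUnion.1 ha
      exact (Finset.mem_inter.1 hi).2
    exact_mod_cast Finset.card_le_card this
  · intro i _ i' _ hne
    rw [Function.onFun, Finset.disjoint_left]
    intro a ha ha'
    exact hne (disjoint_of_ordered hE (Finset.mem_inter.1 ha).1 (Finset.mem_inter.1 ha').1)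

lemma l1_bound (hN : IsSchlumprechtNorm N) {ε : ℕ → ℝ} {y : ℕ → c00} {k : ℕ → ℕ}
    (hε : ∀ n, 1 ≤ n → 0 < ε n) (h1 : ∀ n, 1 ≤ n → N (y n) = 1)
    (hb : ∀ n, 1 ≤ n → ∀ i ∈ (y n).support, ∀ j ∈ (y (n + 1)).support, i < j)
    (h2 : ∀ n, 1 ≤ n → ∀ i ∈ (y n).support, (i : ℝ) ≤ ε n * flog ((k n : ℝ) / 3))
    {j : ℕ} (hj : 1 ≤ j) {l : ℕ} (hk : k j ≤ 3 * l)
    (E : Fin l → Finset ℕ) (hE : ∀ i j : Fin l, i < j → FLt (E i) (E j)) :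
    ∑ i, N (proj (E i) (y j)) ≤ ε j * flog (l : ℝ) + (if j = 1 then 1 else 0) := by
  have hne : ∀ n, 1 ≤ n → (y n).support.Nonempty := by
    intro n hn
    rw [Finsupp.support_nonempty_iff]
    intro h0
    have := h1 n hn
    rw [h0, N_zero hN] at this
    norm_num at this
  refine (sum_le_card hN (h1 j hj) E hE).trans ?_
  set q := (y j).support.max' (hne j hj) with hq
  have hqm : q ∈ (y j).support := Finset.max'_mem _ _
  have hk' : (k j : ℝ) / 3 ≤ l := by
    have : (k j : ℝ) ≤ 3 * l := by exact_mod_cast hk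
    linarith
  have hql : (q : ℝ) ≤ ε j * flog (l : ℝ) :=
    (h2 j hj q hqm).trans (mul_le_mul_of_nonneg_left (flog_mono (by positivity) hk') (hε j hj).le)
  by_cases hj1 : j = 1
  · rw [if_pos hj1]
    have : (y j).support.card ≤ q + 1 := by
      have : (y j).support ⊆ Finset.range (q + 1) := by
        intro a ha
        have := Finset.le_max' _ a ha
        rw [Finset.mem_range]; omega
      simpa using Finset.card_le_card this
    have : ((y j).support.card : ℝ) ≤ q + 1 := by exact_mod_cast this
    linarith
  · rw [if_neg hj1]
    have : (y j).support.card ≤ q := by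
      have : (y j).support ⊆ Finset.Icc 1 q := by
        intro a ha
        have := Finset.le_max' _ a ha
        obtain ⟨c, hc⟩ := hne 1 le_rfl
        have h3 := blk_lt hN h1 hb le_rfl j (by omega) c hc a ha
        rw [Finset.mem_Icc]; omega
      simpa using Finset.card_le_card this
    have : ((y j).support.card : ℝ) ≤ q := by exact_mod_cast this
    linarith

lemma lin_est (hN : IsSchlumprechtNorm N) {r1 : ℝ} (hr1 : 2 ≤ r1) (α : ℕ → ℝ) (y : ℕ → c00)
    (H : Finset ℕ) {l : ℕ} (E : Fin l → Finset ℕ) :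
    ∑ i, normR N r1 (proj (E i) (∑ j ∈ H, α j • y j)) ≤
      ∑ j ∈ H, |α j| * ∑ i, N (proj (E i) (y j)) := by
  have : ∀ i, normR N r1 (proj (E i) (∑ j ∈ H, α j • y j)) ≤
      ∑ j ∈ H, |α j| * N (proj (E i) (y j)) := by
    intro i
    rw [proj_sum]
    refine (normR_sum hN hr1 _ _).trans (Finset.sum_le_sum fun j _ => ?_)
    rw [proj_smul, ← N_smul hN]; exact normR_le_N hN hr1 _
  refine (Finset.sum_le_sum fun i _ => this i).trans (le_of_eq ?_)
  rw [Finset.sum_comm]; apply Finset.sum_congr rfl; intro j _; rw [Finset.mul_sum]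

lemma head_est (hN : IsSchlumprechtNorm N) {r1 : ℝ} (hr1 : 2 ≤ r1) {α ε : ℕ → ℝ} {y : ℕ → c00}
    {k : ℕ → ℕ}
    (hε : ∀ n, 1 ≤ n → 0 < ε n) (h1 : ∀ n, 1 ≤ n → N (y n) = 1)
    (hb : ∀ n, 1 ≤ n → ∀ i ∈ (y n).support, ∀ j ∈ (y (n + 1)).support, i < j)
    (h2 : ∀ n, 1 ≤ n → ∀ i ∈ (y n).support, (i : ℝ) ≤ ε n * flog ((k n : ℝ) / 3))
    {l : ℕ} (H : Finset ℕ) (hH1 : ∀ j ∈ H, 1 ≤ j) (hk : ∀ j ∈ H, k j ≤ 3 * l)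
    {B : ℝ} (hB0 : 0 ≤ B) (hB : ∀ j ∈ H, |α j| ≤ B)
    (E : Fin l → Finset ℕ) (hE : ∀ i j : Fin l, i < j → FLt (E i) (E j)) :
    ∑ i, normR N r1 (proj (E i) (∑ j ∈ H, α j • y j)) ≤
      flog (l : ℝ) * ∑ j ∈ H, ε j * |α j| + B := by
  refine (lin_est hN hr1 α y H E).trans ?_
  have h3 : ∑ j ∈ H, |α j| * ∑ i, N (proj (E i) (y j)) ≤
      ∑ j ∈ H, (flog (l : ℝ) * (ε j * |α j|) + if j = 1 then |α j| else 0) := by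
    apply Finset.sum_le_sum; intro j hj
    refine (mul_le_mul_of_nonneg_left
      (l1_bound hN hε h1 hb h2 (hH1 j hj) (hk j hj) E hE) (abs_nonneg _)).trans (le_of_eq ?_)
    split_ifs <;> ring
  refine h3.trans ?_
  rw [Finset.sum_add_distrib, ← Finset.mul_sum, Finset.sum_ite_eq']
  gcongr
  split_ifs with h
  · exact hB 1 h
  · exact hB0

lemma sup_est (hN : IsSchlumprechtNorm N) {α : ℕ → ℝ} {y : ℕ → c00}
    (h1 : ∀ n, 1 ≤ n → N (y n) = 1)
    (hb : ∀ n, 1 ≤ n → ∀ i ∈ (y n).support, ∀ j ∈ (y (n + 1)).support, i < j)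
    (H : Finset ℕ) (hH1 : ∀ j ∈ H, 1 ≤ j) {B : ℝ} (hB0 : 0 ≤ B) (hB : ∀ j ∈ H, |α j| ≤ B) :
    supNorm (∑ j ∈ H, α j • y j) ≤ B := by
  apply supNorm_le
  intro i
  rw [Finsupp.finsetSum_apply]
  simp only [Finsupp.smul_apply, smul_eq_mul]
  by_cases h : ∃ j ∈ H, y j i ≠ 0
  · obtain ⟨j, hj, hji⟩ := h
    rw [Finset.sum_eq_single_of_mem j hj]
    · rw [abs_mul]
      calc |α j| * |y j i| ≤ |α j| * 1 :=
            mul_le_mul_of_nonneg_left (abs_coord_le hN (h1 j (hH1 j hj)) i) (abs_nonneg _)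
        _ ≤ B := by rw [mul_one]; exact hB j hj
    · intro j' hj' hne
      by_contra h0
      have h0' : y j' i ≠ 0 := fun h => h0 (by rw [h, mul_zero])
      rw [← Finsupp.mem_support_iff] at h0' hji
      rcases lt_or_gt_of_ne hne with h | h
      · exact lt_irrefl _ (blk_lt hN h1 hb (hH1 _ hj') _ h i h0' i hji)
      · exact lt_irrefl _ (blk_lt hN h1 hb (hH1 _ hj) _ h i hji i h0')
  · push Not at h
    rw [Finset.sum_eq_zero]
    · simpa using hB0
    · intro j hj; rw [h j hj, mul_zero]

lemma flog_four (l : ℕ) : flog ((4 * l : ℕ) : ℝ) ≤ flog (l : ℝ) + 2 := by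
  rw [flog_le_iff (by positivity), Real.rpow_add (by norm_num), two_rpow_flog (by positivity)]
  push_cast
  norm_num
  linarith

lemma ratio_le {r : ℝ} (hr : bigR ≤ r) {l : ℕ} (hl : r ≤ l) :
    (flog (l : ℝ))⁻¹ * (flog (l : ℝ) + 3) ≤ flog (9 * r) / flog r := by
  have hR := bigR_ge
  have h4 := flog_ge_of_bigR hr
  have hrl := flog_mono (by linarith : 0 ≤ r) hl
  have h9 : flog r + 3 ≤ flog (9 * r) := by
    have h0 : (0:ℝ) ≤ 9 * r := by linarith
    have e : (2:ℝ) ^ (flog r + 3) ≤ 2 ^ flog (9 * r) := by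
      rw [Real.rpow_add (by norm_num), two_rpow_flog (by linarith), two_rpow_flog h0]
      norm_num
      linarith
    exact (Real.rpow_le_rpow_left_iff (by norm_num)).1 e
  rw [inv_mul_eq_div, div_le_div_iff₀ (by linarith) (by linarith)]
  nlinarith

lemma main_induction (hN : IsSchlumprechtNorm N) {α ε : ℕ → ℝ} {y : ℕ → c00} {k : ℕ → ℕ}
    (hε : ∀ n, 1 ≤ n → 0 < ε n) (h1 : ∀ n, 1 ≤ n → N (y n) = 1)
    (hb : ∀ n, 1 ≤ n → ∀ i ∈ (y n).support, ∀ j ∈ (y (n + 1)).support, i < j)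
    (hk : StrictMono k)
    (hc : ∀ n, 1 ≤ n → ∀ m : ℕ, 1 ≤ m → m ≤ k (n - 1) →
      ∀ E : Fin m → Finset ℕ, (∀ i j : Fin m, i < j → FLt (E i) (E j)) →
        ∑ i, N (proj (E i) (y n)) ≤ 1 + ε n)
    (h2 : ∀ n, 1 ≤ n → ∀ i ∈ (y n).support, (i : ℝ) ≤ ε n * flog ((k n : ℝ) / 3)) (n : ℕ) :
    ∀ a b : ℕ, 1 ≤ a → a ≤ b → b - a < n → ∀ r : ℝ, bigR ≤ r → ∀ B : ℝ,
      (∀ i0 ∈ Finset.Icc a b, |α i0| +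
        N (∑ j ∈ Finset.Icc (i0 + 1) b, α j • (Finsupp.single j (1:ℝ) : c00)) +
        ∑ j ∈ Finset.Icc a b, ε j * |α j| ≤ B) →
      normR N r (∑ j ∈ Finset.Icc a b, α j • y j) ≤ beta r * B := by
  induction n with
  | zero => intro a b _ _ h; omega
  | succ n ih =>
    intro a b ha hab hn r hr B hB
    have hR := bigR_ge
    have h400 := flog_ge_of_bigR hr
    have hr1R := next_ge_bigR hr
    set r1 := r ^ flog r with hr1
    have hr2 : 2 ≤ r1 := by linarith
    set β1 := beta r1 with hβ1
    have hβ : 1 ≤ β1 := one_le_beta hr1R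
    have hI1 : ∀ j ∈ Finset.Icc a b, 1 ≤ j := fun j hj => ha.trans (Finset.mem_Icc.1 hj).1
    have hSnn : ∀ s ⊆ Finset.Icc a b, 0 ≤ ∑ j ∈ s, ε j * |α j| := fun s hs =>
      Finset.sum_nonneg fun j hj => mul_nonneg (hε j (hI1 j (hs hj))).le (abs_nonneg _)
    have hS0 := hSnn _ subset_rfl
    have hαB : ∀ j ∈ Finset.Icc a b, |α j| ≤ B := by
      intro j hj
      have := hB j hj
      have h3 := N_nonneg hN (∑ j ∈ Finset.Icc (j + 1) b, α j • (Finsupp.single j (1:ℝ) : c00))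
      linarith
    have haI : a ∈ Finset.Icc a b := Finset.mem_Icc.2 ⟨le_rfl, hab⟩
    have hB0 : 0 ≤ B := (abs_nonneg _).trans (hαB a haI)
    have hSB : ∑ j ∈ Finset.Icc a b, ε j * |α j| ≤ B := by
      have := hB a haI
      have h3 := N_nonneg hN (∑ j ∈ Finset.Icc (a + 1) b, α j • (Finsupp.single j (1:ℝ) : c00))
      have h4 := abs_nonneg (α a)
      linarith
    by_cases hx : normR N r (∑ j ∈ Finset.Icc a b, α j • y j) =
        supNorm (∑ j ∈ Finset.Icc a b, α j • y j)
    · rw [hx]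
      exact (sup_est hN h1 hb _ hI1 hB0 hαB).trans (le_mul_of_one_le_left hB0 (one_le_beta hr))
    have hchar := char_lemma hN r (by linarith) (by linarith) _ hx
    have hS : Ssup N r (∑ j ∈ Finset.Icc a b, α j • y j) ≤
        flog (9 * r) / flog r * (β1 * B) := by
      have hq0 : 0 ≤ flog (9 * r) / flog r := by
        apply div_nonneg _ (by linarith)
        linarith [flog_mono (by linarith : 0 ≤ r) (by linarith : r ≤ 9 * r)]
      have hβB : 0 ≤ β1 * B := mul_nonneg (by linarith) hB0
      apply Real.sSup_le _ (mul_nonneg hq0 hβB)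
      rintro s ⟨l, hl, E, hE, rfl⟩
      have hl2 : 2 ≤ l := two_le_of_real (by linarith) hl
      have hfl : 0 < flog (l : ℝ) := flog_nat_pos hl2
      have hfl1 : 1 ≤ flog (l : ℝ) := one_le_flog (by exact_mod_cast (by omega : 1 ≤ l))
      suffices hsum : ∑ i, normR N r1 (proj (E i) (∑ j ∈ Finset.Icc a b, α j • y j)) ≤
          (flog (l : ℝ) + 3) * (β1 * B) by
        calc _ ≤ (flog (l : ℝ))⁻¹ * ((flog (l : ℝ) + 3) * (β1 * B)) :=
              mul_le_mul_of_nonneg_left hsum (by positivity)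
          _ = (flog (l : ℝ))⁻¹ * (flog (l : ℝ) + 3) * (β1 * B) := by ring
          _ ≤ _ := mul_le_mul_of_nonneg_right (ratio_le hr hl) hβB
      have hBβ : B ≤ β1 * B := le_mul_of_one_le_left hB0 hβ
      by_cases hex : ∃ j, j ∈ Finset.Icc a b ∧ 3 * l < k j
      swap
      · push Not at hex
        refine (head_est hN hr2 hε h1 hb h2 _ hI1 hex hB0 hαB E hE).trans ?_
        nlinarith
      classical
      set j0 := Nat.find hex with hj0
      obtain ⟨hj0I, hj0k⟩ := Nat.find_spec hex
      rw [← hj0] at hj0I hj0k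
      have hj0I' := Finset.mem_Icc.1 hj0I
      have hsubH : Finset.Ico a j0 ⊆ Finset.Icc a b := by
        intro j hj; rw [Finset.mem_Ico] at hj; rw [Finset.mem_Icc]; omega
      have hsubT : Finset.Icc (j0 + 1) b ⊆ Finset.Icc a b := by
        intro j hj; rw [Finset.mem_Icc] at hj ⊢; omega
      have hunion : ∀ {M : Type} [AddCommMonoid M] (g : ℕ → M), ∑ j ∈ Finset.Icc a b, g j =
          ∑ j ∈ Finset.Ico a j0, g j + (∑ j ∈ ({j0} : Finset ℕ), g j +
            ∑ j ∈ Finset.Icc (j0 + 1) b, g j) := by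
        intro M _ g
        rw [← Finset.sum_union, ← Finset.sum_union]
        · congr 1
          ext j
          simp only [Finset.mem_union, Finset.mem_Icc, Finset.mem_Ico, Finset.mem_singleton]
          omega
        · rw [Finset.disjoint_left]; intro j
          simp only [Finset.mem_union, Finset.mem_Icc, Finset.mem_Ico, Finset.mem_singleton]
          omega
        · rw [Finset.disjoint_left]; intro j
          simp only [Finset.mem_Icc, Finset.mem_singleton]
          omega
      have hheadk : ∀ j ∈ Finset.Ico a j0, k j ≤ 3 * l := by
        intro j hj
        by_contra hlt
        have := Nat.find_min hex (m := j) (by rw [← hj0]; exact (Finset.mem_Ico.1 hj).2)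
        exact this ⟨hsubH hj, by omega⟩
      have hhead := head_est hN hr2 hε h1 hb h2 (Finset.Ico a j0)
        (fun j hj => hI1 j (hsubH hj)) hheadk hB0 (fun j hj => hαB j (hsubH hj)) E hE
      have hmid : ∑ i, normR N r1 (proj (E i) (∑ j ∈ ({j0} : Finset ℕ), α j • y j)) ≤
          flog (l : ℝ) * |α j0| := by
        refine (lin_est hN hr2 α y {j0} E).trans ?_
        rw [Finset.sum_singleton]
        have := sch_le_N hN (y j0) hl2 E hE
        rw [inv_mul_le_iff₀ hfl, h1 j0 (hI1 _ hj0I), mul_one] at this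
        rw [mul_comm]
        exact mul_le_mul_of_nonneg_right this (abs_nonneg _)
      have htail := tail_est hN hr2 hβ α ε y (j0 + 1) b
        (fun j hj => hε j (hI1 j (hsubT hj)))
        (fun j hj j' _ hjj => blk_lt hN h1 hb (hI1 j (hsubT hj)) j' hjj)
        (by
          intro p q hp hpq hqb
          obtain ⟨i0, hi0, hmax⟩ := Finset.exists_max_image (Finset.Icc p q)
            (fun i0 => |α i0| +
              N (∑ j ∈ Finset.Icc (i0 + 1) q, α j • (Finsupp.single j (1:ℝ) : c00)) +
              ∑ j ∈ Finset.Icc p q, ε j * |α j|) (Finset.nonempty_Icc.2 hpq)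
          exact ⟨i0, hi0, ih p q (by omega) hpq (by omega) r1 hr1R _ hmax⟩)
        hl2 E hE
        (by
          intro j hj
          have hj' := Finset.mem_Icc.1 hj
          refine hc j (by omega) l (by omega) ?_ E hE
          have : k j0 ≤ k (j - 1) := hk.monotone (by omega)
          omega)
      set NT := N (∑ j ∈ Finset.Icc (j0 + 1) b, α j • (Finsupp.single j (1:ℝ) : c00)) with hNT
      have hNT0 : 0 ≤ NT := N_nonneg hN _
      have hBj := hB j0 hj0I
      rw [← hNT, hunion (fun j => ε j * |α j|)] at hBj
      have hs1 := hSnn _ hsubH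
      have hs2 := hSnn _ hsubT
      have hs3 : 0 ≤ ∑ j ∈ ({j0} : Finset ℕ), ε j * |α j| := hSnn _ (by simpa using hj0I)
      set S1 := ∑ j ∈ Finset.Ico a j0, ε j * |α j|
      set S2 := ∑ j ∈ Finset.Icc (j0 + 1) b, ε j * |α j|
      set S3 := ∑ j ∈ ({j0} : Finset ℕ), ε j * |α j|
      have hα0 := abs_nonneg (α j0)
      have hsplit : ∑ i, normR N r1 (proj (E i) (∑ j ∈ Finset.Icc a b, α j • y j)) ≤
          ∑ i, normR N r1 (proj (E i) (∑ j ∈ Finset.Ico a j0, α j • y j)) +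
          (∑ i, normR N r1 (proj (E i) (∑ j ∈ ({j0} : Finset ℕ), α j • y j)) +
          ∑ i, normR N r1 (proj (E i) (∑ j ∈ Finset.Icc (j0 + 1) b, α j • y j))) := by
        rw [← Finset.sum_add_distrib, ← Finset.sum_add_distrib]
        apply Finset.sum_le_sum; intro i _
        rw [hunion (fun j => α j • y j), proj_add, proj_add]
        refine (normR_add hN hr2 _ _).trans ?_
        gcongr
        exact normR_add hN hr2 _ _
      set F := flog (l : ℝ) with hF
      have h4 : flog ((4 * l : ℕ) : ℝ) ≤ F + 2 := flog_four l
      have htail2 : ∑ i, normR N r1 (proj (E i) (∑ j ∈ Finset.Icc (j0 + 1) b, α j • y j)) ≤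
          β1 * ((F + 2) * NT + F * S2) := by
        refine htail.trans ?_
        have e1 : flog ((4 * l : ℕ) : ℝ) * NT ≤ (F + 2) * NT :=
          mul_le_mul_of_nonneg_right h4 hNT0
        have e2 : S2 ≤ F * S2 := le_mul_of_one_le_left hs2 hfl1
        exact mul_le_mul_of_nonneg_left (add_le_add e1 e2) (by linarith)
      have hhm : F * S1 + B + F * |α j0| ≤ β1 * (F * S1 + B + F * |α j0|) :=
        le_mul_of_one_le_left (by positivity) hβ
      have hfin : F * S1 + B + F * |α j0| + ((F + 2) * NT + F * S2) ≤ (F + 3) * B := by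
        have hNB : NT ≤ B := by linarith
        have : F * (|α j0| + NT + (S1 + (S3 + S2))) ≤ F * B :=
          mul_le_mul_of_nonneg_left hBj hfl.le
        have h5 : 0 ≤ F * S3 := mul_nonneg hfl.le hs3
        nlinarith
      calc _ ≤ β1 * (F * S1 + B + F * |α j0|) + β1 * ((F + 2) * NT + F * S2) := by linarith
        _ = β1 * (F * S1 + B + F * |α j0| + ((F + 2) * NT + F * S2)) := by ring
        _ ≤ β1 * ((F + 3) * B) := mul_le_mul_of_nonneg_left hfin (by linarith)
        _ = _ := by ring
    have hsq : 0 ≤ (1 - 9 / √(flog r))⁻¹ := by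
      apply inv_nonneg.2
      rw [sub_nonneg, div_le_one (by apply Real.sqrt_pos.2; linarith)]
      apply Real.le_sqrt_of_sq_le; linarith
    refine hchar.trans ((mul_le_mul_of_nonneg_left hS hsq).trans (le_of_eq ?_))
    rw [beta_eq hr]
    unfold bfac
    ring

end final


/-- combination of Lemma 2.6 and the key inductive estimate (2.7)
in the proof of Theorem 2.4. -/
theorem character_lemma_and_inductive_estimate
    (N : c00 → ℝ) (hN : IsSchlumprechtNorm N) :
    ∃ d R : ℝ, 1 < d ∧ 1 < R ∧
      (∀ r : ℝ, 2 ≤ r → d ^ 2 < flog r →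
        ∀ x : c00, normR N r x ≠ supNorm x →
          normR N r x ≤ (1 - d / Real.sqrt (flog r))⁻¹ *
            sSup {s | ∃ l : ℕ, r ≤ (l : ℝ) ∧ ∃ E : Fin l → Finset ℕ,
              (∀ i j : Fin l, i < j → FLt (E i) (E j)) ∧
              s = (flog l)⁻¹ * ∑ i, normR N (r ^ flog r) (proj (E i) x)}) ∧
      ∀ r : ℝ, R ≤ r →
        Multipliable (fun k' : ℕ =>
          (1 - d / Real.sqrt (flog (rseq r k')))⁻¹ *
            (flog (9 * rseq r k') / flog (rseq r k'))) ∧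
        ∀ (ε : ℕ → ℝ) (y : ℕ → c00) (k : ℕ → ℕ),
          (∀ n, 1 ≤ n → 0 < ε n) →
          (Summable fun n => ε (n + 1)) →
          (∀ n, 1 ≤ n → N (y n) = 1) →
          (∀ n, 1 ≤ n → ∀ i ∈ (y n).support, ∀ j ∈ (y (n + 1)).support, i < j) →
          StrictMono k →
          (∀ n, 1 ≤ n → ∀ m : ℕ, 1 ≤ m → m ≤ k (n - 1) →
            ∀ E : Fin m → Finset ℕ, (∀ i j : Fin m, i < j → FLt (E i) (E j)) →
              ∑ i, N (proj (E i) (y n)) ≤ 1 + ε n) →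
          (∀ n, 1 ≤ n → ∀ i ∈ (y n).support, (i : ℝ) ≤ ε n * flog ((k n : ℝ) / 3)) →
          ∀ (m : ℕ) (hm : 1 ≤ m) (α : ℕ → ℝ),
            normR N r (∑ i ∈ Finset.Icc 1 m, α i • y i) ≤
              (∏' k' : ℕ, (1 - d / Real.sqrt (flog (rseq r k')))⁻¹ *
                  (flog (9 * rseq r k') / flog (rseq r k'))) *
                (Finset.Icc 1 m).sup' (Finset.nonempty_Icc.mpr hm)
                  (fun i₀ => |α i₀| +
                    N (∑ i ∈ Finset.Icc (i₀ + 1) m, α i • Finsupp.single i (1 : ℝ)) +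
                    ∑ i ∈ Finset.Icc 1 m, ε i * |α i|) := by

  have hR := bigR_ge
  refine ⟨9, bigR, by norm_num, by linarith, ?_, ?_⟩
  · intro r hr hd x hx
    exact char_lemma hN r hr hd x hx
  · intro r hr
    refine ⟨bfac_multipliable hr, ?_⟩
    intro ε y k hε _ h1 hb hk hc h2 m hm α
    exact main_induction hN hε h1 hb hk hc h2 (m - 1 + 1) 1 m le_rfl hm (by omega) r hr _
      (fun i0 hi0 => Finset.le_sup' (fun i₀ => |α i₀| +
        N (∑ i ∈ Finset.Icc (i₀ + 1) m, α i • Finsupp.single i (1 : ℝ)) +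
        ∑ i ∈ Finset.Icc 1 m, ε i * |α i|) hi0)
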